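/- arXiv:1312.2568 — 2 statements merged into one kernel-verified Lean document; each statement's English description precedes it below -/
import Mathlib

section
/- For every integer d ≥ 3, every nonnegative function u in D^{1,2}(ℝ^d), and q = (d+2)/(d−2), one has S_d · ‖u^q‖_{2d/(d+2)}^2 − ∫_{ℝ^d} u^q (−Δ)^{−1}(u^q) dx ≤ S_d · ‖u‖_{2^*}^{8/(d−2)} · [ S_d ‖∇u‖_2^2 − ‖u‖_{2^*}^2 ], where 2^* = 2d/(d−2). -/
open MeasureTheory Real

noncomputable section

/-- Surface area of the unit sphere `𝕊^{d-1} ⊆ ℝ^d`. -/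
def sphereArea (d : ℕ) : ℝ := 2 * Real.pi ^ ((d : ℝ) / 2) / Real.Gamma ((d : ℝ) / 2)

/-- Green function of `-Δ` on `ℝ^d`, `d ≥ 3`: `G_d(x) = |x|^{2-d} / ((d-2)|𝕊^{d-1}|)`. -/
def greenKernel (d : ℕ) (x : EuclideanSpace ℝ (Fin d)) : ℝ :=
  ‖x‖ ^ ((2 : ℝ) - d) / (((d : ℝ) - 2) * sphereArea d)

/-- `(−Δ)⁻¹ v`, the convolution of `v` with the Green function of `-Δ` on `ℝ^d`. -/
def invLap (d : ℕ) (v : EuclideanSpace ℝ (Fin d) → ℝ) (x : EuclideanSpace ℝ (Fin d)) : ℝ :=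
  ∫ y, greenKernel d (x - y) * v y

/-- The Aubin–Talenti (optimal Sobolev) constant
`S_d = (1/(π d (d−2))) (Γ(d)/Γ(d/2))^{2/d}`. -/
def sobolevConst (d : ℕ) : ℝ :=
  1 / (Real.pi * d * ((d : ℝ) - 2)) *
    (Real.Gamma (d : ℝ) / Real.Gamma ((d : ℝ) / 2)) ^ ((2 : ℝ) / (d : ℝ))

/-- Membership in `D^{1,2}(ℝ^d)`: a (weakly) differentiable function with
`∇u ∈ L²` and `u ∈ L^{2*}`, `2* = 2d/(d-2)`. -/
def MemD12 (d : ℕ) (u : EuclideanSpace ℝ (Fin d) → ℝ) : Prop :=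
  Differentiable ℝ u ∧
  Integrable (fun x => ‖gradient u x‖ ^ 2) ∧
  Integrable (fun x => |u x| ^ (2 * (d : ℝ) / ((d : ℝ) - 2)))

/-- The `L^p` norm of `u`, written with real exponents: `(∫ |u|^p)^{1/p}`. -/
def lpNorm' {d : ℕ} (p : ℝ) (u : EuclideanSpace ℝ (Fin d) → ℝ) : ℝ :=
  (∫ x, |u x| ^ p) ^ (1 / p)

/-- The Laplacian `Δu = ∑ ∂²u/∂x_i²`. -/
def lap (d : ℕ) (u : EuclideanSpace ℝ (Fin d) → ℝ) (x : EuclideanSpace ℝ (Fin d)) : ℝ :=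
  ∑ i : Fin d, iteratedFDeriv ℝ 2 u x ![EuclideanSpace.single i 1, EuclideanSpace.single i 1]

/-!
Put `V = u ^ q`, let `G` be the Green function and let `a` be real. Expanding
`0 ≤ ∫ |a ∇u - ∇(G * V)|²` and integrating by parts in the two terms containing `∇(G * V)` gives
`2 a ∫ V u ≤ a² ∫ |∇u|² + ∫ V (G * V)`. Since `∫ V u = ‖u‖ ^ 2*`, the choice
`a = S ‖u‖ ^ (4 / (d - 2))`, with the norm of `u` in `L^{2*}`, is the inequality with `S` in place
of `S_d`, whatever the real number `S`.

With `K` the gradient of `y ↦ G (x - y)`, both integrations by parts are instances of the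
representation formula `f x = ∫ ⟪∇f y, K⟫ dy`: in polar coordinates around `x` the weight
`r ^ (d - 1)` cancels the singularity of `K`, so that it reduces to the fundamental theorem of
calculus on almost every ray. For `f = G (· - x')` it says that the inner products of the kernels
integrate to `G (x - x')`. Fubini's theorem applies because the Riesz energy of `V` of order `d - 2`
is finite.
-/

section

open Set Filter Topology Metric Module
open scoped ENNReal NNReal

section Polar

theorem comp_smul_homeomorphUnitSphereProd {E α : Type*} [NormedAddCommGroup E] [NormedSpace ℝ E]
    (f : E → α) :
    (fun p : sphere (0 : E) 1 × Ioi (0 : ℝ) ↦ f (p.2.1 • p.1.1)) ∘ homeomorphUnitSphereProd E =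
      f ∘ ((↑) : ({0}ᶜ : Set E) → E) := by
  funext z
  have hz : ‖z.1‖ ≠ 0 := norm_ne_zero_iff.2 z.2
  simp [smul_smul, hz]

variable {F : Type*} [NormedAddCommGroup F]

theorem integrable_polar {E : Type*} [NormedAddCommGroup E] [NormedSpace ℝ E]
    [FiniteDimensional ℝ E] [MeasurableSpace E] [BorelSpace E] {μ : Measure E}
    [μ.IsAddHaarMeasure] {f : E → F} (hf : Integrable f μ) :
    Integrable (fun p : sphere (0 : E) 1 × Ioi (0 : ℝ) ↦ f (p.2.1 • p.1.1))
      (μ.toSphere.prod (.volumeIoiPow (finrank ℝ E - 1))) := by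
  rw [← μ.measurePreserving_homeomorphUnitSphereProd.integrable_comp_emb
    (Homeomorph.measurableEmbedding _), comp_smul_homeomorphUnitSphereProd]
  exact (integrableOn_iff_comap_subtypeVal (measurableSet_singleton _).compl).1 hf.integrableOn

variable [NormedSpace ℝ F]

theorem integrable_volumeIoiPow_iff {k : ℕ} {g : ℝ → F} :
    Integrable (fun r : Ioi (0 : ℝ) ↦ g r) (.volumeIoiPow k) ↔
      IntegrableOn (fun r ↦ r ^ k • g r) (Ioi 0) := by
  rw [Measure.volumeIoiPow, integrable_withDensity_iff_integrable_smul' (by fun_prop) (by simp),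
    integrableOn_iff_comap_subtypeVal measurableSet_Ioi]
  refine integrable_congr (.of_forall fun r ↦ ?_)
  simp [ENNReal.toReal_ofReal (pow_nonneg r.2.out.le k)]

theorem integral_volumeIoiPow (k : ℕ) (g : ℝ → F) :
    ∫ r : Ioi (0 : ℝ), g r ∂.volumeIoiPow k = ∫ r in Ioi 0, r ^ k • g r := by
  rw [Measure.volumeIoiPow, integral_withDensity_eq_integral_toReal_smul (by fun_prop) (by simp),
    ← integral_subtype_comap measurableSet_Ioi]
  refine integral_congr_ae (.of_forall fun r ↦ ?_)
  simp [ENNReal.toReal_ofReal (pow_nonneg r.2.out.le k)]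

variable {E : Type*} [NormedAddCommGroup E] [NormedSpace ℝ E] [FiniteDimensional ℝ E]
  [MeasurableSpace E] [BorelSpace E] {μ : Measure E} [μ.IsAddHaarMeasure] {f : E → F}

theorem ae_integrableOn_ray (hf : Integrable f μ) :
    ∀ᵐ w : sphere (0 : E) 1 ∂μ.toSphere,
      IntegrableOn (fun r : ℝ ↦ r ^ (finrank ℝ E - 1) • f (r • (w : E))) (Ioi 0) := by
  filter_upwards [(integrable_polar hf).prod_right_ae] with w hw
  exact integrable_volumeIoiPow_iff.1 hw

theorem integral_eq_integral_sphere_ray [Nontrivial E] (hf : Integrable f μ) :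
    ∫ z, f z ∂μ = ∫ w : sphere (0 : E) 1,
      (∫ r in Ioi (0 : ℝ), r ^ (finrank ℝ E - 1) • f (r • (w : E))) ∂μ.toSphere := by
  calc ∫ z, f z ∂μ = ∫ z : ({0}ᶜ : Set E), f z ∂μ.comap (↑) := by
        rw [integral_subtype_comap (measurableSet_singleton _).compl, restrict_compl_singleton]
    _ = ∫ p : sphere (0 : E) 1 × Ioi (0 : ℝ), f (p.2.1 • p.1.1)
          ∂μ.toSphere.prod (.volumeIoiPow (finrank ℝ E - 1)) := by
        rw [← μ.measurePreserving_homeomorphUnitSphereProd.integral_comp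
          (Homeomorph.measurableEmbedding _)]
        exact congrArg (integral _) (comp_smul_homeomorphUnitSphereProd f).symm
    _ = _ := by
        rw [integral_prod _ (integrable_polar hf)]
        exact integral_congr_ae
          (.of_forall fun w ↦ integral_volumeIoiPow _ fun r ↦ f (r • (w : E)))

end Polar

section Power

theorem preimage_smul_eball_zero {E : Type*} [NormedAddCommGroup E] [NormedSpace ℝ E] {R : ℝ≥0}
    (hR : R ≠ 0) : (R • ·) ⁻¹' eball (0 : E) R = eball 0 1 := by
  ext z
  have hlt := ENNReal.mul_lt_mul_iff_right (b := ‖z‖ₑ) (c := 1) (ENNReal.coe_ne_zero.2 hR)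
    ENNReal.coe_ne_top
  rw [mul_one] at hlt
  rwa [mem_preimage, mem_eball, mem_eball, edist_zero_right, edist_zero_right, NNReal.smul_def,
    enorm_smul, Real.enorm_of_nonneg R.coe_nonneg, ENNReal.ofReal_coe_nnreal]

theorem preimage_const_sub_eball_zero {E : Type*} [NormedAddCommGroup E] (x : E) (r : ℝ≥0∞) :
    (x - ·) ⁻¹' eball 0 r = eball x r := by
  ext y
  simp [edist_comm y x, edist_eq_enorm_sub]

theorem rpow_neg_le_rpow_neg {a b : ℝ≥0∞} {s : ℝ} (hab : a ≤ b) (hs : 0 ≤ s) :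
    b ^ (-s) ≤ a ^ (-s) := by
  rw [ENNReal.rpow_neg, ENNReal.rpow_neg]
  gcongr

variable {E : Type*} [NormedAddCommGroup E] [NormedSpace ℝ E] [FiniteDimensional ℝ E]
  [MeasurableSpace E] [BorelSpace E] {μ : Measure E} [μ.IsAddHaarMeasure] {s : ℝ} {R : ℝ≥0}

theorem setLIntegral_eq_mul_setLIntegral_comp_smul (f : E → ℝ≥0∞) (hR : R ≠ 0) (A : Set E) :
    ∫⁻ z in A, f z ∂μ =
      (R : ℝ≥0∞) ^ finrank ℝ E * ∫⁻ z in (R • ·) ⁻¹' A, f (R • z) ∂μ := by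
  have hR' : (R : ℝ) ≠ 0 := NNReal.coe_ne_zero.2 hR
  have hRn : (R : ℝ≥0∞) ^ finrank ℝ E ≠ 0 := pow_ne_zero _ (ENNReal.coe_ne_zero.2 hR)
  have hscale : ENNReal.ofReal |((R : ℝ) ^ finrank ℝ E)⁻¹| = ((R : ℝ≥0∞) ^ finrank ℝ E)⁻¹ := by
    rw [abs_of_nonneg (by positivity), ENNReal.ofReal_inv_of_pos (by positivity),
      ENNReal.ofReal_pow R.coe_nonneg, ENNReal.ofReal_coe_nnreal]
  have hcomp : ∫⁻ z in (R • ·) ⁻¹' A, f (R • z) ∂μ =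
      ((R : ℝ≥0∞) ^ finrank ℝ E)⁻¹ * ∫⁻ z in A, f z ∂μ := by
    have hemb := (MeasurableEquiv.smul₀ (α := E) (R : ℝ) hR').measurableEmbedding
    rw [← hscale, ← smul_eq_mul, ← lintegral_smul_measure, ← Measure.restrict_smul,
      ← Measure.map_addHaar_smul μ hR']
    exact (congrArg (fun ν ↦ ∫⁻ z, f z ∂ν) (hemb.restrict_map μ A)).trans
      (hemb.lintegral_map f) |>.symm
  rw [hcomp, ← mul_assoc, ENNReal.mul_inv_cancel hRn (by finiteness), one_mul]

theorem setLIntegral_enorm_rpow_smul (hR : R ≠ 0) (A : Set E) :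
    ∫⁻ z in A, ‖z‖ₑ ^ (-s) ∂μ =
      (R : ℝ≥0∞) ^ (finrank ℝ E - s) * ∫⁻ z in (R • ·) ⁻¹' A, ‖z‖ₑ ^ (-s) ∂μ := by
  have hR' : (R : ℝ≥0∞) ≠ 0 := ENNReal.coe_ne_zero.2 hR
  have hnorm (z : E) : ‖R • z‖ₑ ^ (-s) = (R : ℝ≥0∞) ^ (-s) * ‖z‖ₑ ^ (-s) := by
    rw [NNReal.smul_def, enorm_smul, Real.enorm_of_nonneg R.coe_nonneg, ENNReal.ofReal_coe_nnreal,
      ENNReal.mul_rpow_of_ne_top (by finiteness) (by finiteness)]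
  rw [setLIntegral_eq_mul_setLIntegral_comp_smul _ hR]
  simp only [hnorm]
  rw [lintegral_const_mul _ (by fun_prop), ← mul_assoc, ← ENNReal.rpow_natCast,
    ← ENNReal.rpow_add _ _ hR' (by finiteness), sub_eq_add_neg]

theorem setLIntegral_eball_enorm_sub_rpow (x : E) (hR : R ≠ 0) :
    ∫⁻ y in eball x R, ‖x - y‖ₑ ^ (-s) ∂μ =
      (R : ℝ≥0∞) ^ (finrank ℝ E - s) * ∫⁻ z in eball 0 1, ‖z‖ₑ ^ (-s) ∂μ := by
  rw [← preimage_smul_eball_zero hR, ← setLIntegral_enorm_rpow_smul hR,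
    ← preimage_const_sub_eball_zero]
  exact (Measure.measurePreserving_sub_left μ x).setLIntegral_comp_preimage
    isOpen_eball.measurableSet (f := fun z ↦ ‖z‖ₑ ^ (-s)) (by fun_prop)

theorem setLIntegral_compl_eball_enorm_sub_rpow (x : E) (hR : R ≠ 0) :
    ∫⁻ y in (eball x R)ᶜ, ‖x - y‖ₑ ^ (-s) ∂μ =
      (R : ℝ≥0∞) ^ (finrank ℝ E - s) * ∫⁻ z in (eball 0 1)ᶜ, ‖z‖ₑ ^ (-s) ∂μ := by
  rw [← preimage_smul_eball_zero hR, ← preimage_compl, ← setLIntegral_enorm_rpow_smul hR,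
    ← preimage_const_sub_eball_zero, ← preimage_compl]
  exact (Measure.measurePreserving_sub_left μ x).setLIntegral_comp_preimage
    isOpen_eball.measurableSet.compl (f := fun z ↦ ‖z‖ₑ ^ (-s)) (by fun_prop)

theorem setLIntegral_eball_enorm_rpow_ne_top [Nontrivial E] (hs : s < finrank ℝ E) :
    ∫⁻ z in eball 0 1, ‖z‖ₑ ^ (-s) ∂μ ≠ ∞ := by
  have hint : IntegrableOn (fun z : E ↦ ‖z‖ ^ (-s)) (ball 0 1) μ := by
    rw [integrableOn_fun_norm_addHaar μ (f := fun r ↦ r ^ (-s))]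
    have hpow : EqOn (fun r : ℝ ↦ r ^ ((finrank ℝ E : ℝ) - 1 - s))
        (fun r ↦ r ^ (finrank ℝ E - 1) • r ^ (-s)) (Ioo 0 1) := fun r hr ↦ by
      beta_reduce
      rw [smul_eq_mul, ← rpow_natCast, ← rpow_add hr.1, Nat.cast_pred finrank_pos, sub_eq_add_neg]
    exact (integrableOn_congr_fun hpow measurableSet_Ioo).1
      ((intervalIntegral.integrableOn_Ioo_rpow_iff one_pos).2 (by linarith))
  have hball : eball (0 : E) 1 = ball 0 1 := by simpa using eball_coe (x := (0 : E)) (ε := 1)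
  rw [hball, setLIntegral_congr_fun_ae measurableSet_ball
    (g := fun z ↦ ENNReal.ofReal (‖z‖ ^ (-s)))]
  · exact hint.setLIntegral_lt_top.ne
  · filter_upwards [compl_mem_ae_iff.2 (measure_singleton (0 : E))] with z hz _
    rw [← ofReal_norm, ENNReal.ofReal_rpow_of_pos (norm_pos_iff.2 hz)]

theorem setLIntegral_compl_eball_enorm_rpow_ne_top (hs : finrank ℝ E < s) :
    ∫⁻ z in (eball 0 1)ᶜ, ‖z‖ₑ ^ (-s) ∂μ ≠ ∞ := by
  have hs0 : 0 ≤ s := (Nat.cast_nonneg _).trans hs.le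
  have hle : ∀ z ∈ (eball (0 : E) 1)ᶜ,
      ‖z‖ₑ ^ (-s) ≤ ENNReal.ofReal (2 ^ s) * ENNReal.ofReal ((1 + ‖z‖) ^ (-s)) := fun z hz ↦ by
    have hz1 : 1 ≤ ‖z‖ := by
      simpa [← ofReal_norm, ENNReal.one_le_ofReal] using hz
    have hhalf : ENNReal.ofReal ((1 + ‖z‖) / 2) ≤ ‖z‖ₑ := by
      rw [← ofReal_norm]
      exact ENNReal.ofReal_le_ofReal (by linarith)
    refine (rpow_neg_le_rpow_neg hhalf hs0).trans_eq ?_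
    rw [ENNReal.ofReal_rpow_of_pos (by positivity), ← ENNReal.ofReal_mul (by positivity),
      div_rpow (by positivity) zero_le_two, rpow_neg zero_le_two, div_inv_eq_mul, mul_comm]
  refine ((setLIntegral_mono' isOpen_eball.measurableSet.compl hle).trans
    (setLIntegral_le_lintegral _ _)).trans_lt ?_ |>.ne
  rw [lintegral_const_mul' _ _ ENNReal.ofReal_ne_top]
  exact ENNReal.mul_lt_top ENNReal.ofReal_lt_top (finite_integral_one_add_norm hs)

end Power

section Riesz

theorem rpow_neg_mul_rpow_neg_le_add {A B : ℝ≥0∞} {a b : ℝ} (ha : 0 ≤ a) (hb : 0 ≤ b) :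
    A ^ (-a) * B ^ (-b) ≤ A ^ (-(a + b)) + B ^ (-(a + b)) := by
  simp only [ENNReal.rpow_neg, ← ENNReal.inv_rpow]
  rw [ENNReal.rpow_add_of_nonneg _ _ ha hb, ENNReal.rpow_add_of_nonneg _ _ ha hb]
  rcases le_total A⁻¹ B⁻¹ with h | h
  · exact le_add_left (mul_le_mul_left (ENNReal.rpow_le_rpow h ha) _)
  · exact le_add_right (mul_le_mul_right (ENNReal.rpow_le_rpow h hb) _)

variable {E : Type*} [NormedAddCommGroup E] [NormedSpace ℝ E] [FiniteDimensional ℝ E]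
  [MeasurableSpace E] [BorelSpace E] {μ : Measure E} [μ.IsAddHaarMeasure] {a b : ℝ} {R : ℝ≥0}
  {x x' : E}

theorem setLIntegral_eball_rpow_mul_rpow_le (hb : 0 ≤ b) (hR : R ≠ 0)
    (hx : (R : ℝ≥0∞) + R ≤ ‖x - x'‖ₑ) :
    ∫⁻ y in eball x R, ‖x - y‖ₑ ^ (-a) * ‖x' - y‖ₑ ^ (-b) ∂μ ≤
      (R : ℝ≥0∞) ^ (finrank ℝ E - (a + b)) * ∫⁻ z in eball 0 1, ‖z‖ₑ ^ (-a) ∂μ := by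
  have hle : ∀ y ∈ eball x R,
      ‖x - y‖ₑ ^ (-a) * ‖x' - y‖ₑ ^ (-b) ≤ ‖x - y‖ₑ ^ (-a) * (R : ℝ≥0∞) ^ (-b) := fun y hy ↦ by
    have hyx : edist x y ≤ R := by simpa [edist_comm] using (mem_eball.1 hy).le
    have hyx' : (R : ℝ≥0∞) ≤ ‖x' - y‖ₑ := by
      rw [← edist_eq_enorm_sub] at hx ⊢
      refine (ENNReal.add_le_add_iff_left (a := R) (by finiteness)).1 (hx.trans ?_)
      exact (edist_triangle_right x x' y).trans (by gcongr)
    exact mul_le_mul_right (rpow_neg_le_rpow_neg hyx' hb) _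
  refine (setLIntegral_mono' isOpen_eball.measurableSet hle).trans_eq ?_
  rw [lintegral_mul_const _ (by fun_prop), setLIntegral_eball_enorm_sub_rpow x hR, mul_right_comm,
    ← ENNReal.rpow_add _ _ (by simpa using hR) (by finiteness)]
  ring_nf

theorem setLIntegral_compl_eball_rpow_mul_rpow_le (ha : 0 ≤ a) (hb : 0 ≤ b) (hR : R ≠ 0) :
    ∫⁻ y in (eball x R ∪ eball x' R)ᶜ, ‖x - y‖ₑ ^ (-a) * ‖x' - y‖ₑ ^ (-b) ∂μ ≤
      (R : ℝ≥0∞) ^ (finrank ℝ E - (a + b)) *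
        (2 * ∫⁻ z in (eball 0 1)ᶜ, ‖z‖ₑ ^ (-(a + b)) ∂μ) := by
  calc ∫⁻ y in (eball x R ∪ eball x' R)ᶜ, ‖x - y‖ₑ ^ (-a) * ‖x' - y‖ₑ ^ (-b) ∂μ
      ≤ ∫⁻ y in (eball x R ∪ eball x' R)ᶜ, ‖x - y‖ₑ ^ (-(a + b)) + ‖x' - y‖ₑ ^ (-(a + b)) ∂μ :=
        lintegral_mono fun y ↦ rpow_neg_mul_rpow_neg_le_add ha hb
    _ = ∫⁻ y in (eball x R ∪ eball x' R)ᶜ, ‖x - y‖ₑ ^ (-(a + b)) ∂μ +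
          ∫⁻ y in (eball x R ∪ eball x' R)ᶜ, ‖x' - y‖ₑ ^ (-(a + b)) ∂μ :=
        lintegral_add_left (by fun_prop) _
    _ ≤ ∫⁻ y in (eball x R)ᶜ, ‖x - y‖ₑ ^ (-(a + b)) ∂μ +
          ∫⁻ y in (eball x' R)ᶜ, ‖x' - y‖ₑ ^ (-(a + b)) ∂μ := by
        gcongr
        exacts [subset_union_left, subset_union_right]
    _ = _ := by
        rw [setLIntegral_compl_eball_enorm_sub_rpow x hR,
          setLIntegral_compl_eball_enorm_sub_rpow x' hR]
        ring

theorem lintegral_rpow_mul_rpow_le (ha : 0 ≤ a) (hb : 0 ≤ b) (hR : R ≠ 0)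
    (hx : (R : ℝ≥0∞) + R ≤ ‖x - x'‖ₑ) :
    ∫⁻ y, ‖x - y‖ₑ ^ (-a) * ‖x' - y‖ₑ ^ (-b) ∂μ ≤
      (R : ℝ≥0∞) ^ (finrank ℝ E - (a + b)) *
        (∫⁻ z in eball 0 1, ‖z‖ₑ ^ (-a) ∂μ + ∫⁻ z in eball 0 1, ‖z‖ₑ ^ (-b) ∂μ +
          2 * ∫⁻ z in (eball 0 1)ᶜ, ‖z‖ₑ ^ (-(a + b)) ∂μ) := by
  have hnear' : ∫⁻ y in eball x' R, ‖x - y‖ₑ ^ (-a) * ‖x' - y‖ₑ ^ (-b) ∂μ ≤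
      (R : ℝ≥0∞) ^ (finrank ℝ E - (a + b)) * ∫⁻ z in eball 0 1, ‖z‖ₑ ^ (-b) ∂μ := by
    simp_rw [mul_comm (‖x - _‖ₑ ^ (-a)), add_comm a b]
    exact setLIntegral_eball_rpow_mul_rpow_le ha hR (hx.trans_eq (enorm_sub_rev _ _))
  rw [← lintegral_add_compl _ (isOpen_eball.union isOpen_eball).measurableSet, mul_add, mul_add]
  exact add_le_add
    ((lintegral_union_le _ _ _).trans
      (add_le_add (setLIntegral_eball_rpow_mul_rpow_le hb hR hx) hnear'))
    (setLIntegral_compl_eball_rpow_mul_rpow_le ha hb hR)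

variable (μ) in
theorem exists_lintegral_rpow_mul_rpow_le [Nontrivial E] (ha : a < finrank ℝ E)
    (hb : b < finrank ℝ E) (hab : finrank ℝ E < a + b) :
    ∃ C : ℝ≥0∞, C ≠ ∞ ∧ ∀ x x' : E, ∫⁻ y, ‖x - y‖ₑ ^ (-a) * ‖x' - y‖ₑ ^ (-b) ∂μ ≤
      C * ‖x - x'‖ₑ ^ (finrank ℝ E - (a + b)) := by
  set t : ℝ := finrank ℝ E - (a + b) with ht
  set I : ℝ≥0∞ := ∫⁻ z in eball (0 : E) 1, ‖z‖ₑ ^ (-a) ∂μ +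
    ∫⁻ z in eball (0 : E) 1, ‖z‖ₑ ^ (-b) ∂μ +
      2 * ∫⁻ z in (eball (0 : E) 1)ᶜ, ‖z‖ₑ ^ (-(a + b)) ∂μ
  have hI : I ≠ ∞ := ENNReal.add_ne_top.2 ⟨ENNReal.add_ne_top.2
    ⟨setLIntegral_eball_enorm_rpow_ne_top ha, setLIntegral_eball_enorm_rpow_ne_top hb⟩,
    ENNReal.mul_ne_top ENNReal.ofNat_ne_top (setLIntegral_compl_eball_enorm_rpow_ne_top hab)⟩
  have h2t : (2⁻¹ : ℝ≥0∞) ^ t ≠ ∞ := by simp [ENNReal.rpow_eq_top_iff]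
  refine ⟨2⁻¹ ^ t * (I + 1), ENNReal.mul_ne_top h2t (by finiteness), fun x x' ↦ ?_⟩
  rcases eq_or_ne x x' with rfl | hx
  · simp [ENNReal.zero_rpow_of_neg (sub_neg.2 hab), ht, ENNReal.mul_top]
  have hhalf : ((‖x - x'‖₊ / 2 : ℝ≥0) : ℝ≥0∞) = 2⁻¹ * ‖x - x'‖ₑ := by
    rw [ENNReal.coe_div two_ne_zero, mul_comm, div_eq_mul_inv]
    rfl
  refine (lintegral_rpow_mul_rpow_le (R := ‖x - x'‖₊ / 2) (by linarith) (by linarith)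
    (by simpa [sub_eq_zero] using hx) (by rw [← ENNReal.coe_add, add_halves]; rfl)).trans ?_
  rw [hhalf, ENNReal.mul_rpow_of_ne_top (by finiteness) (by finiteness), mul_right_comm]
  exact mul_le_mul_left (mul_le_mul_right le_self_add _) _

end Riesz

section Energy

theorem lintegral_lintegral_le_two_mul_of_symm {α : Type*} [MeasurableSpace α] {μ : Measure α}
    [SFinite μ] {F : α → α → ℝ≥0∞} (hF : Measurable (Function.uncurry F))
    (hsymm : ∀ x y, F x y = F y x) {φ : α → ℝ≥0} (hφ : Measurable φ) :
    ∫⁻ x, ∫⁻ y, F x y ∂μ ∂μ ≤ 2 * ∫⁻ x, ∫⁻ y in {y | φ y ≤ φ x}, F x y ∂μ ∂μ := by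
  set A : Set (α × α) := {z | φ z.2 ≤ φ z.1}
  have hA : MeasurableSet A := measurableSet_le (hφ.comp measurable_snd) (hφ.comp measurable_fst)
  set T : α → α → ℝ≥0∞ := fun x y ↦ A.indicator (Function.uncurry F) (x, y)
  have hT : Measurable (Function.uncurry T) := hF.indicator hA
  have hle (x y : α) : F x y ≤ T x y + T y x := by
    rcases le_total (φ y) (φ x) with h | h
    · simp [T, A, indicator_apply, h]
    · simp [T, A, indicator_apply, h, hsymm x y]
  have hTset (x : α) : ∫⁻ y, T x y ∂μ = ∫⁻ y in {y | φ y ≤ φ x}, F x y ∂μ :=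
    lintegral_indicator (s := {y | φ y ≤ φ x}) (measurableSet_le hφ measurable_const) (F x)
  calc ∫⁻ x, ∫⁻ y, F x y ∂μ ∂μ ≤ ∫⁻ x, ∫⁻ y, T x y + T y x ∂μ ∂μ :=
        lintegral_mono fun x ↦ lintegral_mono (hle x)
    _ = ∫⁻ x, ∫⁻ y, T x y ∂μ ∂μ + ∫⁻ x, ∫⁻ y, T y x ∂μ ∂μ := by
        rw [← lintegral_add_left hT.lintegral_prod_right]
        exact lintegral_congr fun x ↦ lintegral_add_left hT.of_uncurry_left _
    _ = 2 * ∫⁻ x, ∫⁻ y, T x y ∂μ ∂μ := by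
        rw [← lintegral_lintegral_swap hT.aemeasurable, two_mul]
    _ = _ := by simp only [hTset]

variable {E : Type*} [NormedAddCommGroup E] [NormedSpace ℝ E] [FiniteDimensional ℝ E]
  [MeasurableSpace E] [BorelSpace E] {μ : Measure E} [μ.IsAddHaarMeasure] {s : ℝ} {R : ℝ≥0}

theorem setLIntegral_eball_rpow_mul_le {f : E → ℝ≥0} (hf : Measurable f) (x : E) (t : ℝ≥0)
    (hR : R ≠ 0) :
    ∫⁻ y in eball x R ∩ {y | f y ≤ t}, ‖x - y‖ₑ ^ (-s) * f y ∂μ ≤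
      (R : ℝ≥0∞) ^ (finrank ℝ E - s) * (∫⁻ z in eball 0 1, ‖z‖ₑ ^ (-s) ∂μ) * t := by
  calc ∫⁻ y in eball x R ∩ {y | f y ≤ t}, ‖x - y‖ₑ ^ (-s) * f y ∂μ
      ≤ ∫⁻ y in eball x R ∩ {y | f y ≤ t}, ‖x - y‖ₑ ^ (-s) * t ∂μ :=
        setLIntegral_mono' (isOpen_eball.measurableSet.inter (measurableSet_le hf measurable_const))
          fun y hy ↦ mul_le_mul_right (ENNReal.coe_le_coe.2 hy.2) _
    _ ≤ ∫⁻ y in eball x R, ‖x - y‖ₑ ^ (-s) * t ∂μ := lintegral_mono_set inter_subset_left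
    _ = _ := by rw [lintegral_mul_const _ (by fun_prop), setLIntegral_eball_enorm_sub_rpow x hR]

theorem setLIntegral_compl_eball_rpow_mul_le {f : E → ℝ≥0∞} (hf : Measurable f) {p q : ℝ}
    (hpq : p.HolderConjugate q) (x : E) (hR : R ≠ 0) :
    ∫⁻ y in (eball x R)ᶜ, ‖x - y‖ₑ ^ (-s) * f y ∂μ ≤
      ((R : ℝ≥0∞) ^ (finrank ℝ E - s * q) * ∫⁻ z in (eball 0 1)ᶜ, ‖z‖ₑ ^ (-(s * q)) ∂μ) ^ (1 / q) *
        (∫⁻ y, f y ^ p ∂μ) ^ (1 / p) := by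
  refine (ENNReal.lintegral_mul_le_Lp_mul_Lq _ hpq.symm (by fun_prop) hf.aemeasurable).trans ?_
  simp only [← ENNReal.rpow_mul, neg_mul]
  rw [setLIntegral_compl_eball_enorm_sub_rpow x hR]
  gcongr
  exacts [hpq.one_div_nonneg, Measure.restrict_le_self]

theorem setLIntegral_le_rpow_mul_le [Nontrivial E] {f : E → ℝ≥0} (hf : Measurable f) {p q : ℝ}
    (hpq : p.HolderConjugate q) (hsq : s * q = 2 * finrank ℝ E) (x : E) {t : ℝ≥0} (ht : t ≠ 0) :
    ∫⁻ y in {y | f y ≤ t}, ‖x - y‖ₑ ^ (-s) * f y ∂μ ≤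
      (∫⁻ z in eball 0 1, ‖z‖ₑ ^ (-s) ∂μ +
        (∫⁻ z in (eball 0 1)ᶜ, ‖z‖ₑ ^ (-(s * q)) ∂μ) ^ (1 / q) *
          (∫⁻ y, (f y : ℝ≥0∞) ^ p ∂μ) ^ (1 / p)) * (t : ℝ≥0∞) ^ (p - 1) := by
  have hn : (finrank ℝ E : ℝ) ≠ 0 := Nat.cast_ne_zero.2 finrank_pos.ne'
  -- The radius at which the near and far contributions both scale like `t ^ (p - 1)`.
  set R : ℝ≥0 := t ^ (-(p / finrank ℝ E)) with hRdef
  have hR : R ≠ 0 := by simp [hRdef, ht]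
  have hRpow (r : ℝ) : (R : ℝ≥0∞) ^ r = (t : ℝ≥0∞) ^ (-(p / finrank ℝ E) * r) := by
    rw [hRdef, ENNReal.coe_rpow_of_ne_zero ht, ENNReal.rpow_mul]
  have hnear_scale : (R : ℝ≥0∞) ^ (finrank ℝ E - s) * t = (t : ℝ≥0∞) ^ (p - 1) := by
    have hexp : -(p / finrank ℝ E) * (finrank ℝ E - s) + 1 = p - 1 := by
      have hs : s = 2 * finrank ℝ E / q := eq_div_of_mul_eq hpq.symm.ne_zero hsq
      calc -(p / finrank ℝ E) * (finrank ℝ E - s) + 1 = 2 * (p / q) - p + 1 := by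
            rw [hs]; field_simp; ring
        _ = p - 1 := by rw [hpq.div_conj_eq_sub_one]; ring
    rw [hRpow, ← hexp, ENNReal.rpow_add _ _ (by simpa using ht) (by finiteness), ENNReal.rpow_one]
  have hfar_scale : ((R : ℝ≥0∞) ^ (finrank ℝ E - s * q)) ^ (1 / q) = (t : ℝ≥0∞) ^ (p - 1) := by
    rw [hRpow, ← ENNReal.rpow_mul, ← hpq.div_conj_eq_sub_one, hsq]
    congr 1
    field_simp
    ring
  have hnear := setLIntegral_eball_rpow_mul_le (μ := μ) (s := s) hf x t hR
  have hfar := setLIntegral_compl_eball_rpow_mul_le (μ := μ) (s := s) hf.coe_nnreal_ennreal hpq x hR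
  rw [mul_right_comm, hnear_scale, mul_comm] at hnear
  rw [ENNReal.mul_rpow_of_nonneg _ _ hpq.symm.one_div_nonneg, hfar_scale, mul_assoc, mul_comm]
    at hfar
  calc ∫⁻ y in {y | f y ≤ t}, ‖x - y‖ₑ ^ (-s) * f y ∂μ
      ≤ ∫⁻ y in (eball x R ∩ {y | f y ≤ t}) ∪ (eball x R)ᶜ, ‖x - y‖ₑ ^ (-s) * f y ∂μ :=
        lintegral_mono_set fun y hy ↦ (em _).imp (⟨·, hy⟩) id
    _ ≤ _ := (lintegral_union_le _ _ _).trans (add_le_add hnear hfar)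
    _ = _ := (add_mul _ _ _).symm

theorem exists_setLIntegral_rpow_mul_le [Nontrivial E] (hs0 : 0 < s) (hs : s < finrank ℝ E)
    {f : E → ℝ≥0} (hf : Measurable f) {p : ℝ} (hp : p.HolderConjugate (2 * finrank ℝ E / s))
    (hfp : ∫⁻ y, (f y : ℝ≥0∞) ^ p ∂μ ≠ ∞) :
    ∃ K : ℝ≥0∞, K ≠ ∞ ∧ ∀ (x : E) (t : ℝ≥0),
      ∫⁻ y in {y | f y ≤ t}, ‖x - y‖ₑ ^ (-s) * f y ∂μ ≤ K * (t : ℝ≥0∞) ^ (p - 1) := by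
  set q : ℝ := 2 * finrank ℝ E / s
  have hsq : s * q = 2 * finrank ℝ E := mul_div_cancel₀ _ hs0.ne'
  have hI := setLIntegral_eball_enorm_rpow_ne_top (μ := μ) hs
  have hJ := setLIntegral_compl_eball_enorm_rpow_ne_top (μ := μ) (s := s * q) (by linarith)
  refine ⟨_, ENNReal.add_ne_top.2 ⟨hI, ENNReal.mul_ne_top
    (ENNReal.rpow_ne_top_of_nonneg hp.symm.one_div_nonneg hJ)
    (ENNReal.rpow_ne_top_of_nonneg hp.one_div_nonneg hfp)⟩, fun x t ↦ ?_⟩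
  rcases eq_or_ne t 0 with rfl | ht
  · refine (setLIntegral_eq_zero (measurableSet_le hf measurable_const) fun y hy ↦ ?_).trans_le
      zero_le
    simp [nonpos_iff_eq_zero.1 (show f y ≤ 0 from hy)]
  · exact setLIntegral_le_rpow_mul_le hf hp hsq x ht

/-- The Riesz energy `∬ |V(x)| |x - y|⁻ˢ |V(y)| dx dy` as an extended nonnegative real; its
finiteness justifies every use of Fubini's theorem for the Newton potential of `V`. -/
def rieszEnergy (μ : Measure E) (s : ℝ) (V : E → ℝ) : ℝ≥0∞ :=
  ∫⁻ x, ∫⁻ y, ‖V x‖ₑ * (‖x - y‖ₑ ^ (-s) * ‖V y‖ₑ) ∂μ ∂μ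

theorem rieszEnergy_ne_top [Nontrivial E] (hs0 : 0 < s) (hs : s < finrank ℝ E) {V : E → ℝ}
    (hV : Measurable V) {p : ℝ} (hp : p.HolderConjugate (2 * finrank ℝ E / s))
    (hVp : ∫⁻ x, ‖V x‖ₑ ^ p ∂μ ≠ ∞) : rieszEnergy μ s V ≠ ∞ := by
  obtain ⟨K, hK, hbound⟩ := exists_setLIntegral_rpow_mul_le hs0 hs hV.nnnorm hp hVp
  have hinner (x : E) : ∫⁻ y in {y | ‖V y‖₊ ≤ ‖V x‖₊}, ‖V x‖ₑ * (‖x - y‖ₑ ^ (-s) * ‖V y‖ₑ) ∂μ ≤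
      K * ‖V x‖ₑ ^ p := by
    rw [lintegral_const_mul _ (by fun_prop)]
    calc ‖V x‖ₑ * ∫⁻ y in {y | ‖V y‖₊ ≤ ‖V x‖₊}, ‖x - y‖ₑ ^ (-s) * ‖V y‖ₑ ∂μ
        ≤ ‖V x‖ₑ * (K * ‖V x‖ₑ ^ (p - 1)) := mul_le_mul_right (hbound x ‖V x‖₊) _
      _ = K * (‖V x‖ₑ ^ (1 : ℝ) * ‖V x‖ₑ ^ (p - 1)) := by rw [ENNReal.rpow_one]; ring
      _ = K * ‖V x‖ₑ ^ p := by
        rw [← ENNReal.rpow_add_of_nonneg _ _ zero_le_one hp.sub_one_pos.le, add_sub_cancel]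
  refine ((lintegral_lintegral_le_two_mul_of_symm (by fun_prop) (fun x y ↦ ?_) hV.nnnorm).trans
    (mul_le_mul_right (lintegral_mono hinner) _)).trans_lt ?_ |>.ne
  · rw [enorm_sub_rev]
    ring
  · rw [lintegral_const_mul _ (by fun_prop)]
    finiteness

end Energy

section Rays

variable {E : Type*} [NormedAddCommGroup E] [NormedSpace ℝ E] [FiniteDimensional ℝ E]
  [MeasurableSpace E] [BorelSpace E] {μ : Measure E} [μ.IsAddHaarMeasure]

theorem ae_ray_limit_eq_zero {F : Type*} [NormedAddCommGroup F] [NormedSpace ℝ F] {f : E → F}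
    (hf : Integrable f μ) :
    ∀ᵐ w : sphere (0 : E) 1 ∂μ.toSphere,
      ∀ L : F, Tendsto (fun r : ℝ ↦ f (r • (w : E))) atTop (𝓝 L) → L = 0 := by
  filter_upwards [ae_integrableOn_ray hf] with w hw L hL
  by_contra hL0
  have hhalf : ‖L‖ / 2 < ‖L‖ := half_lt_self (norm_pos_iff.2 hL0)
  obtain ⟨R, hR⟩ := ((hL.norm.eventually_const_lt hhalf).and
    (eventually_ge_atTop 1)).exists_forall_of_atTop
  have hR1 : 1 ≤ R := (hR R le_rfl).2
  have hconst : IntegrableOn (fun _ : ℝ ↦ ‖L‖ / 2) (Ioi R) := by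
    refine Integrable.mono (hw.mono_set (Ioi_subset_Ioi (zero_le_one.trans hR1)))
      aestronglyMeasurable_const ?_
    filter_upwards [ae_restrict_mem measurableSet_Ioi] with r hr
    have hr1 : 1 ≤ r := hR1.trans hr.le
    rw [norm_smul, norm_of_nonneg (by positivity), norm_of_nonneg (by positivity)]
    exact (hR r hr.le).1.le.trans (le_mul_of_one_le_left (norm_nonneg _) (one_le_pow₀ hr1))
  simp [integrableOn_const_iff, hL0] at hconst

open scoped Pointwise in
theorem toSphere_singleton (hE : 1 < finrank ℝ E) (w : sphere (0 : E) 1) :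
    μ.toSphere {w} = 0 := by
  have hspan : (ℝ ∙ (w : E)) ≠ ⊤ := fun htop ↦ by
    have := finrank_span_singleton (K := ℝ) (ne_zero_of_mem_unit_sphere w)
    rw [htop, finrank_top] at this
    omega
  have hcone : Ioo (0 : ℝ) 1 • ((↑) '' {w} : Set E) ⊆ (ℝ ∙ (w : E)) := by
    rintro _ ⟨r, -, _, ⟨_, rfl, rfl⟩, rfl⟩
    exact Submodule.smul_mem _ _ (Submodule.mem_span_singleton_self _)
  rw [Measure.toSphere_apply' _ (measurableSet_singleton _),
    measure_mono_null hcone (Measure.addHaar_submodule _ _ hspan), mul_zero]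

theorem ae_ray_ne (hE : 1 < finrank ℝ E) {a x : E} (hax : a ≠ x) :
    ∀ᵐ w : sphere (0 : E) 1 ∂μ.toSphere, ∀ r : ℝ, 0 < r → x + r • (w : E) ≠ a := by
  have hnorm : ‖a - x‖ ≠ 0 := norm_ne_zero_iff.2 (sub_ne_zero.2 hax)
  let w₀ : sphere (0 : E) 1 := ⟨‖a - x‖⁻¹ • (a - x), by simp [norm_smul, hnorm]⟩
  filter_upwards [measure_eq_zero_iff_ae_notMem.1 (toSphere_singleton (μ := μ) hE w₀)]
    with w hw r hr hcon
  have hdir : a - x = r • (w : E) := by rw [← hcon, add_sub_cancel_left]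
  refine hw (Subtype.ext ?_)
  simp [w₀, hdir, norm_smul, abs_of_pos hr, smul_smul, hr.ne']

end Rays

section NewtonKernel

theorem integrable_inner_of_lintegral_enorm_mul_ne_top {α E : Type*} [MeasurableSpace α]
    {μ : Measure α} [NormedAddCommGroup E] [InnerProductSpace ℝ E] {f g : α → E}
    (hf : AEStronglyMeasurable f μ) (hg : AEStronglyMeasurable g μ)
    (hfg : ∫⁻ a, ‖f a‖ₑ * ‖g a‖ₑ ∂μ ≠ ∞) : Integrable (fun a ↦ inner ℝ (f a) (g a)) μ :=
  ⟨hf.inner hg, (lintegral_mono fun a ↦ (ENNReal.coe_le_coe.2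
    (nnnorm_inner_le_nnnorm (f a) (g a))).trans_eq (ENNReal.coe_mul _ _)).trans_lt hfg.lt_top⟩

theorem integral_Ioi_inner_gradient_ray {E : Type*} [NormedAddCommGroup E]
    [InnerProductSpace ℝ E] [CompleteSpace E] {f : E → ℝ} {g : E → E} {x w : E}
    (hf : ContinuousAt f x)
    (hgrad : ∀ r : ℝ, 0 < r → HasGradientAt f (g (x + r • w)) (x + r • w))
    (hint : IntegrableOn (fun r : ℝ ↦ inner ℝ (g (x + r • w)) w) (Ioi 0))
    (hlim : ∀ L : ℝ, Tendsto (fun r : ℝ ↦ f (x + r • w)) atTop (𝓝 L) → L = 0) :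
    ∫ r in Ioi (0 : ℝ), inner ℝ (g (x + r • w)) w = -f x := by
  have hderiv (r : ℝ) (hr : r ∈ Ioi 0) :
      HasDerivAt (fun r : ℝ ↦ f (x + r • w)) (inner ℝ (g (x + r • w)) w) r := by
    have hray : HasDerivAt (fun r : ℝ ↦ x + r • w) w r := by
      simpa using ((hasDerivAt_id r).smul_const w).const_add x
    have hcomp := (hgrad r hr).hasFDerivAt.comp_hasDerivAt r hray
    rwa [InnerProductSpace.toDual_apply_apply] at hcomp
  have hcont : ContinuousWithinAt (fun r : ℝ ↦ f (x + r • w)) (Ici 0) 0 :=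
    (ContinuousAt.comp (g := f) (by simpa using hf) (by fun_prop)).continuousWithinAt
  have htendsto := tendsto_limUnder_of_hasDerivAt_of_integrableOn_Ioi hderiv hint
  rw [hlim _ htendsto] at htendsto
  simpa using integral_Ioi_of_hasDerivAt_of_tendsto hcont hderiv hint htendsto

variable (E : Type*) [NormedAddCommGroup E] [InnerProductSpace ℝ E] [FiniteDimensional ℝ E]
  [MeasurableSpace E] [BorelSpace E]

/-- The surface area of the unit sphere of a Euclidean space, without reference to coordinates. -/
def unitSphereArea : ℝ := (volume : Measure E).toSphere.real univ

theorem unitSphereArea_pos [Nontrivial E] : 0 < unitSphereArea E := by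
  rw [unitSphereArea, Measure.toSphere_real_apply_univ]
  exact mul_pos (mod_cast finrank_pos)
    (ENNReal.toReal_pos (measure_ball_pos _ _ one_pos).ne' measure_ball_lt_top.ne)

variable {E}

/-- The Green function of `-Δ` on a Euclidean space of dimension greater than two. -/
def greenFunction (z : E) : ℝ :=
  ‖z‖ ^ (2 - finrank ℝ E : ℝ) / ((finrank ℝ E - 2) * unitSphereArea E)

/-- The vector field `-∇G`, for `G` the Green function; equivalently, `newtonKernel (x - y)` is
the gradient of `G (x - y)` with respect to `y`. -/
def newtonKernel (z : E) : E := ((unitSphereArea E)⁻¹ * ‖z‖ ^ (-finrank ℝ E : ℝ)) • z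

@[fun_prop]
theorem measurable_newtonKernel : Measurable (newtonKernel : E → E) := by
  unfold newtonKernel
  fun_prop

theorem enorm_newtonKernel_le (z : E) :
    ‖newtonKernel z‖ₑ ≤ ‖(unitSphereArea E)⁻¹‖ₑ * ‖z‖ₑ ^ (-(finrank ℝ E - 1) : ℝ) := by
  rcases eq_or_ne z 0 with rfl | hz
  · simp [newtonKernel]
  have hz' : 0 < ‖z‖ := norm_pos_iff.2 hz
  have hpow : ‖‖z‖ ^ (-finrank ℝ E : ℝ)‖ₑ = ‖z‖ₑ ^ (-finrank ℝ E : ℝ) := by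
    rw [Real.enorm_eq_ofReal (by positivity), ← ENNReal.ofReal_rpow_of_pos hz', ofReal_norm]
  rw [newtonKernel, enorm_smul, enorm_mul, hpow, mul_assoc, neg_sub, sub_eq_neg_add,
    ENNReal.rpow_add _ _ (enorm_ne_zero.2 hz) enorm_ne_top, ENNReal.rpow_one]

theorem pow_mul_inner_newtonKernel_neg_smul [Nontrivial E] (v : E) {w : E} (hw : ‖w‖ = 1) {r : ℝ}
    (hr : 0 < r) :
    r ^ (finrank ℝ E - 1) * inner ℝ v (newtonKernel (-(r • w))) =
      -((unitSphereArea E)⁻¹ * inner ℝ v w) := by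
  have hcancel : r ^ (finrank ℝ E - 1) * r ^ (-finrank ℝ E : ℝ) * r = 1 := by
    rw [mul_right_comm, pow_sub_one_mul finrank_pos.ne', rpow_neg hr.le, rpow_natCast,
      mul_inv_cancel₀ (by positivity)]
  rw [newtonKernel, norm_neg, norm_smul, hw, norm_of_nonneg hr.le, mul_one, inner_smul_right,
    inner_neg_right, inner_smul_right]
  linear_combination (-(unitSphereArea E)⁻¹ * inner ℝ v w) * hcancel

theorem integral_inner_newtonKernel [Nontrivial E] {f : E → ℝ} {g : E → E} {x : E}
    (hint : Integrable fun y ↦ inner ℝ (g y) (newtonKernel (x - y))) (hf : ContinuousAt f x)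
    (hgrad : ∀ᵐ w : sphere (0 : E) 1 ∂(volume : Measure E).toSphere,
      ∀ r : ℝ, 0 < r → HasGradientAt f (g (x + r • (w : E))) (x + r • (w : E)))
    (hlim : ∀ᵐ w : sphere (0 : E) 1 ∂(volume : Measure E).toSphere,
      ∀ L : ℝ, Tendsto (fun r : ℝ ↦ f (x + r • (w : E))) atTop (𝓝 L) → L = 0) :
    ∫ y, inner ℝ (g y) (newtonKernel (x - y)) = f x := by
  have hσ := (unitSphereArea_pos E).ne'
  have hint' : Integrable fun z ↦ inner ℝ (g (x + z)) (newtonKernel (-z)) := by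
    simpa using hint.comp_add_left x
  have hradial (w : sphere (0 : E) 1) : EqOn
      (fun r : ℝ ↦ r ^ (finrank ℝ E - 1) •
        inner ℝ (g (x + r • (w : E))) (newtonKernel (-(r • (w : E)))))
      (fun r : ℝ ↦ -((unitSphereArea E)⁻¹ * inner ℝ (g (x + r • (w : E))) (w : E))) (Ioi 0) :=
    fun r hr ↦ pow_mul_inner_newtonKernel_neg_smul _ (norm_eq_of_mem_sphere w) hr
  have hray : ∀ᵐ w : sphere (0 : E) 1 ∂(volume : Measure E).toSphere,
      ∫ r in Ioi (0 : ℝ), r ^ (finrank ℝ E - 1) •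
        inner ℝ (g (x + r • (w : E))) (newtonKernel (-(r • (w : E)))) =
      (unitSphereArea E)⁻¹ * f x := by
    filter_upwards [ae_integrableOn_ray hint', hgrad, hlim] with w hw_int hw_grad hw_lim
    have hw_int' : IntegrableOn (fun r : ℝ ↦ inner ℝ (g (x + r • (w : E))) (w : E)) (Ioi 0) := by
      refine (((integrableOn_congr_fun (hradial w) measurableSet_Ioi).1 hw_int).const_mul
        (-unitSphereArea E)).congr (.of_forall fun r ↦ ?_)
      simp [hσ]
    rw [setIntegral_congr_fun measurableSet_Ioi (hradial w), integral_neg, integral_const_mul,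
      integral_Ioi_inner_gradient_ray hf hw_grad hw_int' hw_lim, mul_neg, neg_neg]
  calc ∫ y, inner ℝ (g y) (newtonKernel (x - y))
      = ∫ z, inner ℝ (g (x + z)) (newtonKernel (-z)) := by
        simp [← integral_add_left_eq_self (μ := volume)
          (fun y ↦ inner ℝ (g y) (newtonKernel (x - y))) x]
    _ = unitSphereArea E * ((unitSphereArea E)⁻¹ * f x) := by
        rw [integral_eq_integral_sphere_ray hint', integral_congr_ae hray, integral_const,
          smul_eq_mul, unitSphereArea]
    _ = f x := mul_inv_cancel_left₀ hσ _

theorem hasGradientAt_greenFunction_sub (hE : 2 < finrank ℝ E) {a y : E} (hy : y ≠ a) :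
    HasGradientAt (fun y ↦ greenFunction (y - a)) (newtonKernel (a - y)) y := by
  have : Nontrivial E := nontrivial_of_finrank_pos (R := ℝ) (by omega)
  have hσ := (unitSphereArea_pos E).ne'
  have hE' : (finrank ℝ E - 2 : ℝ) ≠ 0 := sub_ne_zero.2 (mod_cast hE.ne')
  have hpos : 0 < ‖y - a‖ := norm_pos_iff.2 (sub_ne_zero.2 hy)
  have hsq_rpow (z : E) (p : ℝ) : (‖z‖ ^ 2) ^ p = ‖z‖ ^ (2 * p) := by
    rw [← rpow_natCast, ← rpow_mul (norm_nonneg _), Nat.cast_ofNat]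
  have hsq : HasFDerivAt (fun y ↦ ‖y - a‖ ^ 2) (2 • innerSL ℝ (y - a)) y := by
    simpa using ((hasFDerivAt_id y).sub_const a).norm_sq
  have hfun : (fun y ↦ greenFunction (y - a)) = fun y ↦
      (‖y - a‖ ^ 2) ^ ((2 - finrank ℝ E : ℝ) / 2) *
        ((finrank ℝ E - 2) * unitSphereArea E)⁻¹ := by
    funext z
    rw [greenFunction, div_eq_mul_inv, hsq_rpow, mul_div_cancel₀ _ two_ne_zero]
  rw [hasGradientAt_iff_hasFDerivAt, hfun]
  refine ((hsq.rpow_const (.inl (by positivity))).mul_const _).congr_fderiv ?_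
  ext v
  have hexp : 2 * ((2 - finrank ℝ E : ℝ) / 2 - 1) = -finrank ℝ E := by ring
  rw [hsq_rpow, hexp, newtonKernel, norm_sub_rev, ← neg_sub y a]
  simp only [neg_sub, mul_inv_rev, map_smul, map_sub, smul_apply, sub_apply, coe_innerSL_apply,
    InnerProductSpace.toDual_apply_apply, smul_eq_mul, nsmul_eq_mul, Nat.cast_ofNat]
  field_simp
  ring

theorem tendsto_greenFunction_ray (hE : 2 < finrank ℝ E) (z : E) {w : E} (hw : w ≠ 0) :
    Tendsto (fun r : ℝ ↦ greenFunction (z + r • w)) atTop (𝓝 0) := by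
  have hray : Tendsto (fun r : ℝ ↦ ‖z + r • w‖) atTop atTop := by
    refine tendsto_norm_cobounded_atTop.comp (tendsto_const_add_cobounded z |>.comp ?_)
    rw [← tendsto_norm_atTop_iff_cobounded]
    simpa [norm_smul] using tendsto_abs_atTop_atTop.atTop_mul_const (norm_pos_iff.2 hw)
  have hE' : (0 : ℝ) < finrank ℝ E - 2 := sub_pos.2 (mod_cast hE)
  simpa [greenFunction, Function.comp_def] using
    ((tendsto_rpow_neg_atTop hE').comp hray).div_const ((finrank ℝ E - 2) * unitSphereArea E)

theorem exists_lintegral_enorm_newtonKernel_mul_le (hE : 2 < finrank ℝ E) :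
    ∃ C : ℝ≥0∞, C ≠ ∞ ∧ ∀ x x' : E,
      ∫⁻ y, ‖newtonKernel (x - y)‖ₑ * ‖newtonKernel (x' - y)‖ₑ ≤
        C * ‖x - x'‖ₑ ^ (-(finrank ℝ E - 2) : ℝ) := by
  have : Nontrivial E := nontrivial_of_finrank_pos (R := ℝ) (by omega)
  have hE' : (2 : ℝ) < finrank ℝ E := mod_cast hE
  set n : ℝ := (finrank ℝ E : ℝ)
  set c : ℝ≥0∞ := ‖(unitSphereArea E)⁻¹‖ₑ
  obtain ⟨C, hC, hbound⟩ := exists_lintegral_rpow_mul_rpow_le (volume : Measure E)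
    (a := n - 1) (b := n - 1) (by linarith) (by linarith) (by linarith)
  refine ⟨c * c * C, by finiteness, fun x x' ↦ ?_⟩
  calc ∫⁻ y, ‖newtonKernel (x - y)‖ₑ * ‖newtonKernel (x' - y)‖ₑ
      ≤ ∫⁻ y, c * c * (‖x - y‖ₑ ^ (-(n - 1)) * ‖x' - y‖ₑ ^ (-(n - 1))) :=
        lintegral_mono fun y ↦ (mul_le_mul' (enorm_newtonKernel_le _)
          (enorm_newtonKernel_le _)).trans_eq (mul_mul_mul_comm ..)
    _ = c * c * ∫⁻ y, ‖x - y‖ₑ ^ (-(n - 1)) * ‖x' - y‖ₑ ^ (-(n - 1)) :=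
        lintegral_const_mul _ (by fun_prop)
    _ ≤ c * c * (C * ‖x - x'‖ₑ ^ (n - (n - 1 + (n - 1)))) := by gcongr; exact hbound x x'
    _ = c * c * C * ‖x - x'‖ₑ ^ (-(n - 2)) := by rw [← mul_assoc]; congr 2; ring

theorem integral_inner_newtonKernel_newtonKernel (hE : 2 < finrank ℝ E) {x x' : E}
    (hx : x ≠ x') :
    ∫ y, inner ℝ (newtonKernel (x' - y)) (newtonKernel (x - y)) = greenFunction (x - x') := by
  have : Nontrivial E := nontrivial_of_finrank_pos (R := ℝ) (by omega)
  obtain ⟨C, hC, hbound⟩ := exists_lintegral_enorm_newtonKernel_mul_le hE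
  have hfin : ∫⁻ y, ‖newtonKernel (x' - y)‖ₑ * ‖newtonKernel (x - y)‖ₑ ≠ ∞ :=
    ne_top_of_le_ne_top (ENNReal.mul_ne_top hC (ENNReal.rpow_ne_top_of_ne_zero
      (enorm_ne_zero.2 (sub_ne_zero.2 hx.symm)) enorm_ne_top)) (hbound x' x)
  refine integral_inner_newtonKernel (f := fun y ↦ greenFunction (y - x'))
    (integrable_inner_of_lintegral_enorm_mul_ne_top (Measurable.aestronglyMeasurable
      (by fun_prop)) (Measurable.aestronglyMeasurable (by fun_prop)) hfin)
    (hasGradientAt_greenFunction_sub hE hx).hasFDerivAt.continuousAt ?_ ?_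
  · filter_upwards [ae_ray_ne (by omega) hx.symm] with w hw r hr
    exact hasGradientAt_greenFunction_sub hE (hw r hr)
  · refine .of_forall fun w L hL ↦ tendsto_nhds_unique hL ?_
    simpa only [add_sub_right_comm] using
      tendsto_greenFunction_ray hE (x - x') (ne_zero_of_mem_unit_sphere w)

theorem integral_inner_gradient_newtonKernel [Nontrivial E] {u : E → ℝ}
    (hu : Differentiable ℝ u) {p : ℝ} (hp : 0 < p) (hup : Integrable fun y ↦ |u y| ^ p) {x : E}
    (hint : Integrable fun y ↦ inner ℝ (gradient u y) (newtonKernel (x - y))) :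
    ∫ y, inner ℝ (gradient u y) (newtonKernel (x - y)) = u x := by
  refine integral_inner_newtonKernel hint (hu x).continuousAt
    (.of_forall fun w r _ ↦ (hu _).hasGradientAt) ?_
  filter_upwards [ae_ray_limit_eq_zero (hup.comp_add_left x)] with w hw L hL
  have hL0 : |L| ^ p = 0 := hw _ (hL.abs.rpow_const (.inr hp.le))
  exact abs_eq_zero.1 ((rpow_eq_zero (abs_nonneg L) hp.ne').1 hL0)

end NewtonKernel

section Fubini

variable {α β H : Type*} [MeasurableSpace α] [MeasurableSpace β] {μ : Measure α} {ν : Measure β}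

theorem lintegral_mul_ne_top_of_sq {f g : α → ℝ≥0∞} (hf : Measurable f)
    (hf2 : ∫⁻ a, f a ^ 2 ∂μ ≠ ∞) (hg2 : ∫⁻ a, g a ^ 2 ∂μ ≠ ∞) : ∫⁻ a, f a * g a ∂μ ≠ ∞ := by
  have hle (a : α) : f a * g a ≤ f a ^ 2 + g a ^ 2 := by
    rw [sq, sq]
    rcases le_total (f a) (g a) with h | h
    · exact (mul_le_mul_left h _).trans le_add_self
    · exact (mul_le_mul_right h _).trans le_self_add
  refine ne_top_of_le_ne_top (ENNReal.add_ne_top.2 ⟨hf2, hg2⟩) ((lintegral_mono hle).trans_eq ?_)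
  exact lintegral_add_left (hf.pow_const 2) _

variable [NormedAddCommGroup H] [InnerProductSpace ℝ H] [SFinite ν]
  {g : α → H} {k : α × β → H}

theorem integrable_prod_inner (hg : AEStronglyMeasurable g μ)
    (hk : AEStronglyMeasurable k (μ.prod ν))
    (hfin : ∫⁻ y, ‖g y‖ₑ * ∫⁻ x, ‖k (y, x)‖ₑ ∂ν ∂μ ≠ ∞) :
    Integrable (fun p : α × β ↦ inner ℝ (g p.1) (k p)) (μ.prod ν) := by
  refine integrable_inner_of_lintegral_enorm_mul_ne_top hg.comp_fst hk ?_
  rw [lintegral_prod (fun p ↦ ‖g p.1‖ₑ * ‖k p‖ₑ) (hg.comp_fst.enorm.mul hk.enorm)]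
  simpa only [lintegral_const_mul' _ _ enorm_ne_top] using hfin

theorem ae_integral_inner_eq [CompleteSpace H] (hg : AEStronglyMeasurable g μ)
    (hk : AEStronglyMeasurable k (μ.prod ν))
    (hfin : ∫⁻ y, ‖g y‖ₑ * ∫⁻ x, ‖k (y, x)‖ₑ ∂ν ∂μ ≠ ∞) :
    ∀ᵐ y ∂μ, ∫ x, inner ℝ (g y) (k (y, x)) ∂ν = inner ℝ (g y) (∫ x, k (y, x) ∂ν) := by
  filter_upwards [ae_lt_top' (hg.enorm.mul hk.enorm.lintegral_prod_right') hfin,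
    hk.prodMk_left] with y hy hky
  rcases eq_or_ne (g y) 0 with hgy | hgy
  · simp [hgy]
  · refine integral_inner ⟨hky, lt_top_iff_ne_top.2 fun htop ↦ hy.ne ?_⟩ _
    exact (congrArg (‖g y‖ₑ * ·) htop).trans (ENNReal.mul_top (enorm_ne_zero.2 hgy))

theorem integrable_inner_integral [SFinite μ] [CompleteSpace H] (hg : AEStronglyMeasurable g μ)
    (hk : AEStronglyMeasurable k (μ.prod ν))
    (hfin : ∫⁻ y, ‖g y‖ₑ * ∫⁻ x, ‖k (y, x)‖ₑ ∂ν ∂μ ≠ ∞) :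
    Integrable (fun y ↦ inner ℝ (g y) (∫ x, k (y, x) ∂ν)) μ :=
  (integrable_prod_inner hg hk hfin).integral_prod_left.congr (ae_integral_inner_eq hg hk hfin)

theorem integral_inner_integral [SFinite μ] [CompleteSpace H] (hg : AEStronglyMeasurable g μ)
    (hk : AEStronglyMeasurable k (μ.prod ν))
    (hfin : ∫⁻ y, ‖g y‖ₑ * ∫⁻ x, ‖k (y, x)‖ₑ ∂ν ∂μ ≠ ∞) :
    ∫ y, inner ℝ (g y) (∫ x, k (y, x) ∂ν) ∂μ = ∫ x, ∫ y, inner ℝ (g y) (k (y, x)) ∂μ ∂ν := by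
  rw [← integral_congr_ae (ae_integral_inner_eq hg hk hfin)]
  exact integral_integral_swap (integrable_prod_inner hg hk hfin)

end Fubini

section NewtonField

variable {E : Type*} [NormedAddCommGroup E] [InnerProductSpace ℝ E] [FiniteDimensional ℝ E]
  [MeasurableSpace E] [BorelSpace E]

/-- The gradient of the Newton potential of `V`, given by differentiation under the integral sign.
It takes the value `0` where the integral diverges. -/
def newtonField (V : E → ℝ) (y : E) : E := ∫ x, V x • newtonKernel (x - y)

/-- The integral of the norms in the definition of `newtonField`, as an extended nonnegative
real. -/
def newtonMajorant (V : E → ℝ) (y : E) : ℝ≥0∞ := ∫⁻ x, ‖V x • newtonKernel (x - y)‖ₑ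

theorem enorm_newtonField_le (V : E → ℝ) (y : E) : ‖newtonField V y‖ₑ ≤ newtonMajorant V y :=
  enorm_integral_le_lintegral_enorm _

variable {V : E → ℝ}

theorem measurable_smul_newtonKernel_sub (hV : Measurable V) :
    Measurable fun p : E × E ↦ V p.2 • newtonKernel (p.2 - p.1) := by
  fun_prop

theorem measurable_newtonMajorant (hV : Measurable V) : Measurable (newtonMajorant V) :=
  (measurable_smul_newtonKernel_sub hV).enorm.lintegral_prod_right'

theorem aestronglyMeasurable_newtonField (hV : Measurable V) :
    AEStronglyMeasurable (newtonField V) volume :=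
  (measurable_smul_newtonKernel_sub hV).stronglyMeasurable.integral_prod_right'
    |>.aestronglyMeasurable

theorem lintegral_enorm_mul_newtonMajorant (hV : Measurable V) (x : E) :
    ∫⁻ y, ‖V x • newtonKernel (x - y)‖ₑ * newtonMajorant V y =
      ∫⁻ x', ‖V x‖ₑ * ((∫⁻ y, ‖newtonKernel (x - y)‖ₑ * ‖newtonKernel (x' - y)‖ₑ) * ‖V x'‖ₑ) := by
  calc ∫⁻ y, ‖V x • newtonKernel (x - y)‖ₑ * newtonMajorant V y
      = ∫⁻ y, ∫⁻ x', ‖V x • newtonKernel (x - y)‖ₑ * ‖V x' • newtonKernel (x' - y)‖ₑ :=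
        lintegral_congr fun y ↦ (lintegral_const_mul _ (by fun_prop)).symm
    _ = ∫⁻ x', ∫⁻ y, ‖V x • newtonKernel (x - y)‖ₑ * ‖V x' • newtonKernel (x' - y)‖ₑ :=
        lintegral_lintegral_swap (by fun_prop)
    _ = _ := lintegral_congr fun x' ↦ by
        rw [← lintegral_mul_const _ (by fun_prop), ← lintegral_const_mul _ (by fun_prop)]
        refine lintegral_congr fun y ↦ ?_
        rw [enorm_smul, enorm_smul]
        ring

theorem lintegral_lintegral_enorm_mul_newtonMajorant_ne_top (hE : 2 < finrank ℝ E)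
    (hV : Measurable V) (hVE : rieszEnergy volume (finrank ℝ E - 2) V ≠ ∞) :
    ∫⁻ x, ∫⁻ y, ‖V x • newtonKernel (x - y)‖ₑ * newtonMajorant V y ≠ ∞ := by
  obtain ⟨C, hC, hbound⟩ := exists_lintegral_enorm_newtonKernel_mul_le hE
  have hle (x : E) : ∫⁻ y, ‖V x • newtonKernel (x - y)‖ₑ * newtonMajorant V y ≤
      C * ∫⁻ x', ‖V x‖ₑ * (‖x - x'‖ₑ ^ (-(finrank ℝ E - 2) : ℝ) * ‖V x'‖ₑ) := by
    rw [lintegral_enorm_mul_newtonMajorant hV, ← lintegral_const_mul' _ _ hC]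
    refine lintegral_mono fun x' ↦ ?_
    calc _ ≤ ‖V x‖ₑ * ((C * ‖x - x'‖ₑ ^ (-(finrank ℝ E - 2) : ℝ)) * ‖V x'‖ₑ) := by
          gcongr; exact hbound x x'
      _ = _ := by ring
  refine ne_top_of_le_ne_top (ENNReal.mul_ne_top hC hVE) ((lintegral_mono hle).trans_eq ?_)
  rw [lintegral_const_mul' _ _ hC, rieszEnergy]

theorem lintegral_newtonMajorant_sq_ne_top (hE : 2 < finrank ℝ E) (hV : Measurable V)
    (hVE : rieszEnergy volume (finrank ℝ E - 2) V ≠ ∞) :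
    ∫⁻ y, newtonMajorant V y ^ 2 ≠ ∞ := by
  have hJ := measurable_newtonMajorant hV
  refine ne_of_eq_of_ne ?_ (lintegral_lintegral_enorm_mul_newtonMajorant_ne_top hE hV hVE)
  rw [lintegral_lintegral_swap (by fun_prop)]
  refine lintegral_congr fun y ↦ ?_
  rw [lintegral_mul_const _ (by fun_prop), sq, newtonMajorant]

theorem lintegral_enorm_newtonField_mul_newtonMajorant_ne_top (hE : 2 < finrank ℝ E)
    (hV : Measurable V) (hVE : rieszEnergy volume (finrank ℝ E - 2) V ≠ ∞) :
    ∫⁻ y, ‖newtonField V y‖ₑ * newtonMajorant V y ≠ ∞ := by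
  refine ne_top_of_le_ne_top (lintegral_newtonMajorant_sq_ne_top hE hV hVE)
    (lintegral_mono fun y ↦ ?_)
  rw [sq]
  exact mul_le_mul_left (enorm_newtonField_le V y) _

theorem integrable_norm_newtonField_sq (hE : 2 < finrank ℝ E) (hV : Measurable V)
    (hVE : rieszEnergy volume (finrank ℝ E - 2) V ≠ ∞) :
    Integrable fun y ↦ ‖newtonField V y‖ ^ 2 := by
  simp only [← real_inner_self_eq_norm_sq]
  exact integrable_inner_integral (aestronglyMeasurable_newtonField hV)
    (measurable_smul_newtonKernel_sub hV).aestronglyMeasurable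
    (lintegral_enorm_newtonField_mul_newtonMajorant_ne_top hE hV hVE)

theorem integral_inner_smul_newtonKernel_newtonField (hE : 2 < finrank ℝ E) (hV : Measurable V)
    {x : E} (hx : ∫⁻ y, ‖V x • newtonKernel (x - y)‖ₑ * newtonMajorant V y ≠ ∞) :
    ∫ y, inner ℝ (V x • newtonKernel (x - y)) (newtonField V y) =
      V x * ∫ x', greenFunction (x - x') * V x' := by
  have : Nontrivial E := nontrivial_of_finrank_pos (R := ℝ) (by omega)
  calc ∫ y, inner ℝ (V x • newtonKernel (x - y)) (newtonField V y)
      = ∫ x', ∫ y, inner ℝ (V x • newtonKernel (x - y)) (V x' • newtonKernel (x' - y)) :=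
        integral_inner_integral (Measurable.aestronglyMeasurable (by fun_prop))
          (measurable_smul_newtonKernel_sub hV).aestronglyMeasurable hx
    _ = ∫ x', V x * (greenFunction (x - x') * V x') := by
        refine integral_congr_ae ?_
        filter_upwards [Measure.ae_ne volume x] with x' hx'
        simp only [real_inner_smul_left, real_inner_smul_right, integral_const_mul]
        simp_rw [real_inner_comm (newtonKernel (x' - _))]
        rw [integral_inner_newtonKernel_newtonKernel hE hx'.symm]
        ring
    _ = V x * ∫ x', greenFunction (x - x') * V x' := integral_const_mul _ _

theorem integral_norm_newtonField_sq (hE : 2 < finrank ℝ E) (hV : Measurable V)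
    (hVE : rieszEnergy volume (finrank ℝ E - 2) V ≠ ∞) :
    ∫ y, ‖newtonField V y‖ ^ 2 = ∫ x, V x * ∫ x', greenFunction (x - x') * V x' := by
  have hJ := measurable_newtonMajorant hV
  have hmeas : Measurable fun p : E × E ↦
      ‖V p.1 • newtonKernel (p.1 - p.2)‖ₑ * newtonMajorant V p.2 := by fun_prop
  calc ∫ y, ‖newtonField V y‖ ^ 2
      = ∫ x, ∫ y, inner ℝ (newtonField V y) (V x • newtonKernel (x - y)) := by
        simp only [← real_inner_self_eq_norm_sq]
        exact integral_inner_integral (aestronglyMeasurable_newtonField hV)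
          (measurable_smul_newtonKernel_sub hV).aestronglyMeasurable
          (lintegral_enorm_newtonField_mul_newtonMajorant_ne_top hE hV hVE)
    _ = ∫ x, V x * ∫ x', greenFunction (x - x') * V x' := by
        refine integral_congr_ae ?_
        filter_upwards [ae_lt_top hmeas.lintegral_prod_right'
          (lintegral_lintegral_enorm_mul_newtonMajorant_ne_top hE hV hVE)] with x hx
        simp_rw [real_inner_comm (V x • newtonKernel _)]
        exact integral_inner_smul_newtonKernel_newtonField hE hV hx.ne

variable {u : E → ℝ}

theorem measurable_gradient (u : E → ℝ) : Measurable (gradient u) :=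
  (InnerProductSpace.toDual ℝ E).symm.continuous.measurable.comp (measurable_fderiv ℝ u)

theorem lintegral_enorm_gradient_mul_newtonMajorant_ne_top (hE : 2 < finrank ℝ E)
    (hV : Measurable V) (hVE : rieszEnergy volume (finrank ℝ E - 2) V ≠ ∞)
    (hu2 : Integrable fun x ↦ ‖gradient u x‖ ^ 2) :
    ∫⁻ y, ‖gradient u y‖ₑ * newtonMajorant V y ≠ ∞ := by
  refine lintegral_mul_ne_top_of_sq (measurable_gradient u).enorm ?_
    (lintegral_newtonMajorant_sq_ne_top hE hV hVE)
  have hnorm (x : E) : ‖gradient u x‖ₑ ^ 2 = ‖‖gradient u x‖ ^ 2‖ₑ := by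
    rw [enorm_pow, enorm_norm]
  simp only [hnorm]
  exact hu2.2.ne

theorem integral_inner_gradient_newtonField (hE : 2 < finrank ℝ E) (hV : Measurable V)
    (hVE : rieszEnergy volume (finrank ℝ E - 2) V ≠ ∞) (hu : Differentiable ℝ u)
    (hu2 : Integrable fun x ↦ ‖gradient u x‖ ^ 2) {p : ℝ} (hp : 0 < p)
    (hup : Integrable fun x ↦ |u x| ^ p) :
    ∫ y, inner ℝ (gradient u y) (newtonField V y) = ∫ x, V x * u x := by
  have : Nontrivial E := nontrivial_of_finrank_pos (R := ℝ) (by omega)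
  have hg := (measurable_gradient u).aestronglyMeasurable (μ := volume)
  have hk := (measurable_smul_newtonKernel_sub hV).aestronglyMeasurable (μ := volume.prod volume)
  have hfin := lintegral_enorm_gradient_mul_newtonMajorant_ne_top hE hV hVE hu2
  calc ∫ y, inner ℝ (gradient u y) (newtonField V y)
      = ∫ x, ∫ y, inner ℝ (gradient u y) (V x • newtonKernel (x - y)) :=
        integral_inner_integral hg hk hfin
    _ = ∫ x, V x * u x := by
        refine integral_congr_ae ?_
        filter_upwards [(integrable_prod_inner hg hk hfin).prod_left_ae] with x hx
        simp only [real_inner_smul_right] at hx ⊢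
        rw [integral_const_mul]
        rcases eq_or_ne (V x) 0 with hVx | hVx
        · rw [hVx, zero_mul, zero_mul]
        · rw [integral_inner_gradient_newtonKernel hu hp hup
            ((integrable_const_mul_iff hVx.isUnit _).1 hx)]

theorem two_mul_integral_mul_le (hE : 2 < finrank ℝ E) (hV : Measurable V)
    (hVE : rieszEnergy volume (finrank ℝ E - 2) V ≠ ∞) (hu : Differentiable ℝ u)
    (hu2 : Integrable fun x ↦ ‖gradient u x‖ ^ 2) {p : ℝ} (hp : 0 < p)
    (hup : Integrable fun x ↦ |u x| ^ p) (a : ℝ) :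
    2 * a * ∫ x, V x * u x ≤
      a ^ 2 * (∫ x, ‖gradient u x‖ ^ 2) + ∫ x, V x * ∫ x', greenFunction (x - x') * V x' := by
  have hsquare (y : E) : 2 * a * inner ℝ (gradient u y) (newtonField V y) ≤
      a ^ 2 * ‖gradient u y‖ ^ 2 + ‖newtonField V y‖ ^ 2 := by
    have := norm_sub_sq_real (a • gradient u y) (newtonField V y)
    rw [norm_smul, mul_pow, norm_eq_abs, sq_abs, real_inner_smul_left] at this
    linarith [sq_nonneg ‖a • gradient u y - newtonField V y‖]
  have hinner : Integrable fun y ↦ inner ℝ (gradient u y) (newtonField V y) :=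
    integrable_inner_integral (measurable_gradient u).aestronglyMeasurable
      (measurable_smul_newtonKernel_sub hV).aestronglyMeasurable
      (lintegral_enorm_gradient_mul_newtonMajorant_ne_top hE hV hVE hu2)
  have hfield := integrable_norm_newtonField_sq hE hV hVE
  rw [← integral_inner_gradient_newtonField hE hV hVE hu hu2 hp hup,
    ← integral_norm_newtonField_sq hE hV hVE, ← integral_const_mul, ← integral_const_mul,
    ← integral_add (hu2.const_mul _) hfield]
  exact integral_mono (hinner.const_mul _) ((hu2.const_mul _).add hfield) hsquare

end NewtonField

section EuclideanSpace

theorem unitSphereArea_euclideanSpace {d : ℕ} (hd : d ≠ 0) :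
    unitSphereArea (EuclideanSpace ℝ (Fin d)) = sphereArea d := by
  have : Nonempty (Fin d) := ⟨0, by omega⟩
  have : Nontrivial (EuclideanSpace ℝ (Fin d)) :=
    nontrivial_of_finrank_pos (R := ℝ) (by rw [finrank_euclideanSpace_fin]; omega)
  have hΓ : Gamma (d / 2 + 1) = d / 2 * Gamma (d / 2) := Gamma_add_one (by positivity)
  have hΓ0 : Gamma (d / 2 : ℝ) ≠ 0 := (Gamma_pos_of_pos (by positivity)).ne'
  have hπ : √π ^ d = π ^ (d / 2 : ℝ) := by
    rw [sqrt_eq_rpow, ← rpow_mul_natCast pi_pos.le, one_div_mul_eq_div]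
  rw [unitSphereArea, Measure.toSphere_real_apply_univ, measureReal_def,
    EuclideanSpace.volume_ball, finrank_euclideanSpace_fin, Fintype.card_fin, ENNReal.ofReal_one,
    one_pow, one_mul, hΓ, hπ, ENNReal.toReal_ofReal (by positivity), sphereArea]
  field_simp

theorem greenFunction_eq_greenKernel {d : ℕ} (hd : d ≠ 0) (z : EuclideanSpace ℝ (Fin d)) :
    greenFunction z = greenKernel d z := by
  rw [greenFunction, greenKernel, unitSphereArea_euclideanSpace hd, finrank_euclideanSpace_fin]

variable {d : ℕ} {u : EuclideanSpace ℝ (Fin d) → ℝ} {p q : ℝ}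

theorem lpNorm'_nonneg : 0 ≤ lpNorm' p u :=
  rpow_nonneg (integral_nonneg fun _ ↦ by positivity) _

theorem lpNorm'_rpow_self (hp : p ≠ 0) : lpNorm' p u ^ p = ∫ x, |u x| ^ p := by
  rw [lpNorm', ← rpow_mul (integral_nonneg fun _ ↦ by positivity), one_div_mul_cancel hp, rpow_one]

theorem lpNorm'_comp_rpow (hu0 : ∀ x, 0 ≤ u x) (hq : q ≠ 0) :
    lpNorm' p (fun x ↦ u x ^ q) = lpNorm' (q * p) u ^ q := by
  have hpow (x : EuclideanSpace ℝ (Fin d)) : |u x ^ q| ^ p = |u x| ^ (q * p) := by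
    rw [abs_of_nonneg (rpow_nonneg (hu0 x) q), abs_of_nonneg (hu0 x), rpow_mul (hu0 x)]
  simp only [lpNorm', hpow]
  rw [← rpow_mul (integral_nonneg fun _ ↦ by positivity)]
  congr 1
  field_simp

theorem integral_rpow_mul_self_eq_lpNorm'_rpow (hu0 : ∀ x, 0 ≤ u x) (hq : 0 ≤ q) :
    ∫ x, u x ^ q * u x = lpNorm' (q + 1) u ^ (q + 1) := by
  rw [lpNorm'_rpow_self (by positivity)]
  congr with x
  rw [abs_of_nonneg (hu0 x), rpow_add_one' (hu0 x) (by positivity)]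

theorem rieszEnergy_rpow_ne_top (hd : 3 ≤ d) (hu0 : ∀ x, 0 ≤ u x) (hu : MemD12 d u) :
    rieszEnergy volume (d - 2) (fun x ↦ u x ^ (((d : ℝ) + 2) / ((d : ℝ) - 2))) ≠ ∞ := by
  have hd' : (3 : ℝ) ≤ d := mod_cast hd
  have hd2 : (0 : ℝ) < d - 2 := by linarith
  have hfinrank : finrank ℝ (EuclideanSpace ℝ (Fin d)) = d := finrank_euclideanSpace_fin
  have : Nontrivial (EuclideanSpace ℝ (Fin d)) :=
    nontrivial_of_finrank_pos (R := ℝ) (by omega)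
  have hum : Measurable u := hu.1.continuous.measurable
  have hconj : (2 * d / (d + 2) : ℝ).HolderConjugate
      (2 * finrank ℝ (EuclideanSpace ℝ (Fin d)) / (d - 2)) := by
    rw [hfinrank, holderConjugate_iff, one_lt_div (by linarith)]
    exact ⟨by linarith, by field_simp; ring⟩
  refine rieszEnergy_ne_top hd2 (by rw [hfinrank]; linarith) (by fun_prop) hconj ?_
  refine ne_of_eq_of_ne (lintegral_congr fun x ↦ ?_) hu.2.2.2.ne
  beta_reduce
  rw [← enorm_rpow_of_nonneg (rpow_nonneg (hu0 x) _) (by positivity), ← rpow_mul (hu0 x),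
    abs_of_nonneg (hu0 x)]
  congr 2
  field_simp

theorem two_mul_integral_rpow_mul_le (hd : 3 ≤ d) (hu0 : ∀ x, 0 ≤ u x) (hu : MemD12 d u) (a : ℝ) :
    2 * a * ∫ x, u x ^ (((d : ℝ) + 2) / ((d : ℝ) - 2)) * u x ≤
      a ^ 2 * (∫ x, ‖gradient u x‖ ^ 2) + ∫ x, u x ^ (((d : ℝ) + 2) / ((d : ℝ) - 2)) *
        invLap d (fun y ↦ u y ^ (((d : ℝ) + 2) / ((d : ℝ) - 2))) x := by
  have hd' : (3 : ℝ) ≤ d := mod_cast hd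
  have hd2 : (0 : ℝ) < d - 2 := by linarith
  have hfinrank : finrank ℝ (EuclideanSpace ℝ (Fin d)) = d := finrank_euclideanSpace_fin
  have hum : Measurable u := hu.1.continuous.measurable
  have henergy : rieszEnergy volume (finrank ℝ (EuclideanSpace ℝ (Fin d)) - 2)
      (fun x ↦ u x ^ (((d : ℝ) + 2) / ((d : ℝ) - 2))) ≠ ∞ := by
    rw [hfinrank]
    exact rieszEnergy_rpow_ne_top hd hu0 hu
  have hdual := two_mul_integral_mul_le (by omega) (by fun_prop) henergy hu.1 hu.2.1
    (by positivity) hu.2.2 a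
  simpa only [hfinrank, greenFunction_eq_greenKernel (d := d) (by omega), invLap] using hdual

theorem improved_sobolev_hls_general (hd : 3 ≤ d) (hu0 : ∀ x, 0 ≤ u x) (hu : MemD12 d u)
    (S : ℝ) :
    S * lpNorm' (2 * (d : ℝ) / ((d : ℝ) + 2))
          (fun x ↦ u x ^ (((d : ℝ) + 2) / ((d : ℝ) - 2))) ^ (2 : ℝ) -
      ∫ x, u x ^ (((d : ℝ) + 2) / ((d : ℝ) - 2)) *
        invLap d (fun y ↦ u y ^ (((d : ℝ) + 2) / ((d : ℝ) - 2))) x ≤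
    S * lpNorm' (2 * (d : ℝ) / ((d : ℝ) - 2)) u ^ ((8 : ℝ) / ((d : ℝ) - 2)) *
      (S * (∫ x, ‖gradient u x‖ ^ 2) -
        lpNorm' (2 * (d : ℝ) / ((d : ℝ) - 2)) u ^ (2 : ℝ)) := by
  have hd' : (3 : ℝ) ≤ d := mod_cast hd
  have hd2 : (0 : ℝ) < d - 2 := by linarith
  set r : ℝ := 4 / (d - 2) with hr
  have : 0 < r := by positivity
  have hq : ((d : ℝ) + 2) / (d - 2) = r + 1 := by rw [hr]; field_simp; ring
  have hstar : 2 * (d : ℝ) / (d - 2) = r + 1 + 1 := by rw [hr]; field_simp; ring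
  have hconj : (r + 1) * (2 * (d : ℝ) / (d + 2)) = r + 1 + 1 := by rw [← hstar, ← hq]; field_simp
  have height : (8 : ℝ) / (d - 2) = r * 2 := by rw [hr]; ring
  have hdual := two_mul_integral_rpow_mul_le hd hu0 hu (S * lpNorm' (r + 1 + 1) u ^ r)
  rw [hq, integral_rpow_mul_self_eq_lpNorm'_rpow hu0 (by positivity), mul_pow] at hdual
  rw [hq, hstar, height, lpNorm'_comp_rpow hu0 (by positivity), hconj]
  set M := lpNorm' (r + 1 + 1) u
  have hM : 0 ≤ M := lpNorm'_nonneg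
  have hpair : M ^ r * M ^ (r + 1 + 1) = (M ^ (r + 1)) ^ (2 : ℝ) := by
    rw [← rpow_add_of_nonneg hM (by positivity) (by positivity), ← rpow_mul hM]
    ring_nf
  have hdeficit : M ^ (r * 2) * M ^ (2 : ℝ) = (M ^ (r + 1)) ^ (2 : ℝ) := by
    rw [← rpow_add_of_nonneg hM (by positivity) (by positivity), ← rpow_mul hM]
    ring_nf
  have hsq : (M ^ r) ^ 2 = M ^ (r * 2) := mod_cast (rpow_mul_natCast hM r 2).symm
  rw [hsq] at hdual
  linear_combination hdual - 2 * S * hpair + S * hdeficit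

end EuclideanSpace

end

/-- improved Sobolev inequality controlling the Hardy-Littlewood-Sobolev
deficit by the Sobolev deficit, with proportionality constant `S_d`. -/
theorem improved_sobolev_hls (d : ℕ) (hd : 3 ≤ d)
    (u : EuclideanSpace ℝ (Fin d) → ℝ) (hu0 : ∀ x, 0 ≤ u x) (hu : MemD12 d u) :
    sobolevConst d *
        lpNorm' (2 * (d : ℝ) / ((d : ℝ) + 2))
          (fun x => u x ^ (((d : ℝ) + 2) / ((d : ℝ) - 2))) ^ (2 : ℝ) -
      ∫ x, u x ^ (((d : ℝ) + 2) / ((d : ℝ) - 2)) *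
        invLap d (fun y => u y ^ (((d : ℝ) + 2) / ((d : ℝ) - 2))) x ≤
    sobolevConst d *
      lpNorm' (2 * (d : ℝ) / ((d : ℝ) - 2)) u ^ ((8 : ℝ) / ((d : ℝ) - 2)) *
      (sobolevConst d * (∫ x, ‖gradient u x‖ ^ 2) -
        lpNorm' (2 * (d : ℝ) / ((d : ℝ) - 2)) u ^ (2 : ℝ)) :=
  improved_sobolev_hls_general hd hu0 hu _
end
end

section
/- Let d be a real number with d > 2 and set s_d = (4/(d(d−2))) (Γ((d+1)/2)/(√π Γ(d/2)))^{2/d}. For every nonnegative function v on (0,∞) with ∫_0^∞ v^{2d/(d+2)} r^{d−1} dr finite, one has ∫_0^∞ v K[v] r^{d−1} dr ≤ s_d ( ∫_0^∞ v^{2d/(d+2)} r^{d−1} dr )^{1+2/d}. -/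
open MeasureTheory Real

noncomputable section

/-- The radial inverse Laplacian with real dimension parameter `d`:
`K[v](r) = ∫_r^∞ s^{1−d} ∫_0^s v(t) t^{d−1} dt ds`. -/
def radInvLap (d : ℝ) (v : ℝ → ℝ) (r : ℝ) : ℝ :=
  ∫ s in Set.Ioi r, s ^ (1 - d) * ∫ t in Set.Ioo (0 : ℝ) s, v t * t ^ (d - 1)

/-- The sharp radial Sobolev constant with real dimension parameter `d`:
`s_d = (4/(d(d−2))) (Γ((d+1)/2)/(√π Γ(d/2)))^{2/d}`. -/
def sRad (d : ℝ) : ℝ :=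
  4 / (d * (d - 2)) *
    (Real.Gamma ((d + 1) / 2) / (Real.sqrt Real.pi * Real.Gamma (d / 2))) ^ ((2 : ℝ) / d)

/-!
By Fubini, `∫ v K[v] r^(d-1) dr = ∫ |K[v]'|² r^(d-1) dr`. Hölder's inequality bounds the left side
by the `L^p` norm of `v` times the `L^q` norm of `K[v]`, where `p = 2d/(d+2)` and `q = 2d/(d-2)`,
and the sharp radial Sobolev inequality bounds that `L^q` norm by the right side, so one factor of
the energy cancels.

The Sobolev inequality is proved by calibration. With `a = (d-2)/2` and `φ = r^a w`, the energy
density in the variable `log r` is `(φ' - aφ)²`. Let `M` be the maximum of `φ`. Completing the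
square with the slope `aφ √(1 - (φ/M)^(2/a))` before the maximum and its negative after it gives
`∫ |w'|² ≥ a² M^(-2/a) ∫ w^q + 4 ∫₀^M a x √(1 - (x/M)^(2/a)) dx`, where the last integral is a beta
function times `M²`. Weighted AM–GM removes `M` and produces the constant `s_d`.

This applies directly to `v` supported in an annulus; general `v` follows by truncation and Fatou.
-/

open Filter Set Topology

section RealAnalysis

lemma exists_isMaxOn_Ici_of_tendsto {f : ℝ → ℝ} {c l x₀ : ℝ} (hf : ContinuousOn f (Ici c))
    (hlim : Tendsto f atTop (𝓝 l)) (hx₀ : x₀ ∈ Ici c) (hl : l < f x₀) :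
    ∃ x ∈ Ici c, IsMaxOn f (Ici c) x := by
  refine hf.exists_isMaxOn' isClosed_Ici hx₀ ?_
  rw [cocompact_eq_atBot_atTop, inf_sup_right, (disjoint_atBot_principal_Ici c).eq_bot, bot_sup_eq]
  exact ((hlim.eventually_lt_const hl).filter_mono inf_le_left).mono fun x hx => hx.le

lemma indicator_nonneg_ae {α : Type*} [MeasurableSpace α] {μ : Measure α} {f : α → ℝ} {A : Set α}
    (hf : 0 ≤ᵐ[μ] f) : 0 ≤ᵐ[μ] A.indicator f := by
  filter_upwards [hf] with x hx using indicator_apply_nonneg fun _ => hx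

lemma memLp_of_integrable_rpow {α : Type*} [MeasurableSpace α] {μ : Measure α} {f : α → ℝ} {p : ℝ}
    (hp : 0 < p) (hf : 0 ≤ᵐ[μ] f) (hfp : Integrable (fun x => f x ^ p) μ) :
    MemLp f (ENNReal.ofReal p) μ := by
  have hmeas : AEStronglyMeasurable f μ :=
    (hfp.aemeasurable.pow_const p⁻¹).aestronglyMeasurable.congr <| by
      filter_upwards [hf] with x hx using rpow_rpow_inv hx hp.ne'
  rw [← integrable_norm_rpow_iff hmeas (by simpa using hp) ENNReal.ofReal_ne_top,
    ENNReal.toReal_ofReal hp.le]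
  refine hfp.congr ?_
  filter_upwards [hf] with x hx
  rw [norm_of_nonneg hx]

lemma integrable_and_integral_le_of_tendsto {α : Type*} [MeasurableSpace α] {μ : Measure α}
    {F : ℕ → α → ℝ} {f : α → ℝ} {C : ℝ}
    (hF : ∀ n, Integrable (F n) μ) (hF0 : ∀ n, 0 ≤ᵐ[μ] F n) (hFC : ∀ n, ∫ x, F n x ∂μ ≤ C)
    (hlim : ∀ᵐ x ∂μ, Tendsto (fun n => F n x) atTop (𝓝 (f x))) :
    Integrable f μ ∧ ∫ x, f x ∂μ ≤ C := by
  have hbound (n : ℕ) : ∫⁻ x, ‖F n x‖ₑ ∂μ ≤ ENNReal.ofReal C := by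
    rw [← ofReal_integral_norm_eq_lintegral_enorm (hF n)]
    refine ENNReal.ofReal_le_ofReal ((integral_congr_ae ?_).trans_le (hFC n))
    filter_upwards [hF0 n] with x hx using norm_of_nonneg hx
  have hfatou : ∫⁻ x, ‖f x‖ₑ ∂μ ≤ ENNReal.ofReal C :=
    calc ∫⁻ x, ‖f x‖ₑ ∂μ = ∫⁻ x, liminf (fun n => ‖F n x‖ₑ) atTop ∂μ :=
          lintegral_congr_ae (hlim.mono fun x hx => hx.enorm.liminf_eq.symm)
      _ ≤ liminf (fun n => ∫⁻ x, ‖F n x‖ₑ ∂μ) atTop :=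
          lintegral_liminf_le' fun n => (hF n).aemeasurable.enorm
      _ ≤ ENNReal.ofReal C := liminf_le_of_frequently_le' (.of_forall hbound)
  have hf : Integrable f μ := ⟨aestronglyMeasurable_of_tendsto_ae atTop (fun n => (hF n).1) hlim,
    hfatou.trans_lt ENNReal.ofReal_lt_top⟩
  have hC : 0 ≤ C := (integral_nonneg_of_ae (hF0 0)).trans (hFC 0)
  refine ⟨hf, (integral_mono hf hf.norm fun x => le_norm_self _).trans ?_⟩
  rwa [← ENNReal.ofReal_le_ofReal_iff hC, ofReal_integral_norm_eq_lintegral_enorm hf]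

lemma integral_mul_setIntegral_Ioi_eq {μ ν : Measure ℝ} [SFinite μ] [SFinite ν] {f g : ℝ → ℝ}
    (hf : Integrable f μ) (hg : Integrable g ν) :
    ∫ r, f r * ∫ s in Ioi r, g s ∂ν ∂μ = ∫ s, g s * ∫ r in Iio s, f r ∂μ ∂ν := by
  have hint := (hf.mul_prod hg).indicator (measurableSet_lt measurable_fst measurable_snd)
  have hswap := integral_integral_swap
    (f := fun r s => indicator {p : ℝ × ℝ | p.1 < p.2} (fun p => f p.1 * g p.2) (r, s)) hint
  have hleft (r : ℝ) : (fun s => indicator {p : ℝ × ℝ | p.1 < p.2} (fun p => f p.1 * g p.2) (r, s))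
      = (Ioi r).indicator fun s => f r * g s := by
    ext s; simp [indicator_apply]
  have hright (s : ℝ) : (fun r => indicator {p : ℝ × ℝ | p.1 < p.2} (fun p => f p.1 * g p.2) (r, s))
      = (Iio s).indicator fun r => g s * f r := by
    ext r; simp [indicator_apply, mul_comm]
  simpa only [hleft, hright, integral_indicator measurableSet_Ioi,
    integral_indicator measurableSet_Iio, integral_const_mul] using hswap

lemma hasDerivAt_setIntegral_Ioi {g : ℝ → ℝ} {c r : ℝ} (hcr : c < r) (hg : IntegrableOn g (Ioi c))
    (hgr : ContinuousAt g r) : HasDerivAt (fun x => ∫ s in Ioi x, g s) (-g r) r := by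
  have hprim : HasDerivAt (fun x => ∫ s in c..x, g s) (g r) r :=
    intervalIntegral.integral_hasDerivAt_right
      ((intervalIntegrable_iff_integrableOn_Ioc_of_le hcr.le).2 (hg.mono_set Ioc_subset_Ioi_self))
      ⟨Ioi c, Ioi_mem_nhds hcr, hg.aestronglyMeasurable⟩ hgr
  refine (hprim.const_sub (∫ s in Ioi c, g s)).congr_of_eventuallyEq ?_
  filter_upwards [lt_mem_nhds hcr] with x hx
  rw [← intervalIntegral.integral_Ioi_sub_Ioi hg hx.le, sub_sub_cancel]

lemma sub_le_setIntegral_Ioi_of_hasDerivAt {Ψ Ψ' D : ℝ → ℝ} {c l : ℝ}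
    (hcont : ContinuousOn Ψ (Ici c)) (hderiv : ∀ r ∈ Ioi c, HasDerivAt Ψ (Ψ' r) r)
    (hD : IntegrableOn D (Ioi c)) (hle : ∀ r ∈ Ioi c, Ψ' r ≤ D r) (hl : Tendsto Ψ atTop (𝓝 l)) :
    l - Ψ c ≤ ∫ r in Ioi c, D r := by
  refine le_of_tendsto_of_tendsto (hl.sub_const (Ψ c))
    (intervalIntegral_tendsto_integral_Ioi c hD tendsto_id) ?_
  filter_upwards [eventually_ge_atTop c] with y hy
  exact intervalIntegral.sub_le_integral_of_hasDeriv_right_of_le hy (hcont.mono Icc_subset_Ici_self)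
    (fun r hr => (hderiv r hr.1).hasDerivWithinAt)
    (((integrableOn_Ici_iff_integrableOn_Ioi (by simp)).2 hD).mono_set Icc_subset_Ici_self)
    (fun r hr => hle r hr.1)

end RealAnalysis

/-- The measure `r ^ (d - 1) dr` on `(0, ∞)`. For integer `d` this is Lebesgue measure on `ℝ^d` seen
through radial functions, up to the area of the unit sphere. -/
def radMeasure (d : ℝ) : Measure ℝ :=
  (volume.restrict (Ioi 0)).withDensity fun r => ENNReal.ofReal (r ^ (d - 1))

section RadMeasure

variable {d : ℝ} {f : ℝ → ℝ}

instance : SFinite (radMeasure d) := inferInstanceAs (SFinite (Measure.withDensity _ _))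

instance : NullSingletonClass (radMeasure d) :=
  inferInstanceAs (NullSingletonClass (Measure.withDensity _ _))

lemma ae_radMeasure_of_forall_pos {P : ℝ → Prop} (h : ∀ r, 0 < r → P r) :
    ∀ᵐ r ∂radMeasure d, P r :=
  (withDensity_absolutelyContinuous _ _).ae_le (ae_restrict_of_forall_mem measurableSet_Ioi h)

lemma aestronglyMeasurable_radMeasure_of_continuousOn (hf : ContinuousOn f (Ioi 0)) :
    AEStronglyMeasurable f (radMeasure d) :=
  (hf.aestronglyMeasurable measurableSet_Ioi).mono_ac (withDensity_absolutelyContinuous _ _)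

lemma integrableOn_radMeasure_iff {s : Set ℝ} (hs : MeasurableSet s) :
    IntegrableOn f s (radMeasure d) ↔ IntegrableOn (fun r => f r * r ^ (d - 1)) (s ∩ Ioi 0) := by
  rw [IntegrableOn, radMeasure, restrict_withDensity hs,
    integrable_withDensity_iff_integrable_smul' (by fun_prop)
      (.of_forall fun _ => ENNReal.ofReal_lt_top), Measure.restrict_restrict hs]
  refine integrableOn_congr_fun (fun r hr => ?_) (hs.inter measurableSet_Ioi)
  rw [ENNReal.toReal_ofReal (rpow_nonneg (le_of_lt hr.2) _), smul_eq_mul, mul_comm]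

lemma integrable_radMeasure_iff :
    Integrable f (radMeasure d) ↔ IntegrableOn (fun r => f r * r ^ (d - 1)) (Ioi 0) := by
  simpa using integrableOn_radMeasure_iff (d := d) (f := f) MeasurableSet.univ

lemma setIntegral_radMeasure {s : Set ℝ} (hs : MeasurableSet s) :
    ∫ r in s, f r ∂radMeasure d = ∫ r in s ∩ Ioi 0, f r * r ^ (d - 1) := by
  rw [radMeasure, setIntegral_withDensity_eq_setIntegral_toReal_smul (by fun_prop)
    (.of_forall fun _ => ENNReal.ofReal_lt_top) _ hs,
    Measure.restrict_restrict hs]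
  refine setIntegral_congr_fun (hs.inter measurableSet_Ioi) fun r hr => ?_
  rw [ENNReal.toReal_ofReal (rpow_nonneg (le_of_lt hr.2) _), smul_eq_mul, mul_comm]

lemma integral_radMeasure : ∫ r, f r ∂radMeasure d = ∫ r in Ioi 0, f r * r ^ (d - 1) := by
  simpa using setIntegral_radMeasure (d := d) (f := f) MeasurableSet.univ

lemma radMeasure_Iio (hd : 0 < d) {s : ℝ} (hs : 0 ≤ s) :
    radMeasure d (Iio s) = ENNReal.ofReal (s ^ d / d) := by
  have hint : IntegrableOn (fun t : ℝ => t ^ (d - 1)) (Ioo 0 s) :=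
    (intervalIntegrable_iff_integrableOn_Ioo_of_le hs).1
      (intervalIntegral.intervalIntegrable_rpow' (by linarith))
  rw [radMeasure, withDensity_apply _ measurableSet_Iio,
    Measure.restrict_restrict measurableSet_Iio, Iio_inter_Ioi,
    ← ofReal_integral_eq_lintegral_ofReal hint
      (ae_restrict_of_forall_mem measurableSet_Ioo fun t ht => rpow_nonneg ht.1.le _),
    ← integral_Ioc_eq_integral_Ioo, ← intervalIntegral.integral_of_le hs,
    integral_rpow (Or.inl (by linarith)), sub_add_cancel, zero_rpow hd.ne', sub_zero]

lemma integrable_radMeasure_of_le_rpow {B C p : ℝ} (hd : 0 < d) (hp : d < p)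
    (hf : ContinuousOn f (Ioi 0)) (hf0 : ∀ r, 0 < r → 0 ≤ f r) (hB : ∀ r, 0 < r → f r ≤ B)
    (hC : ∀ r, 0 < r → f r ≤ C * r ^ (-p)) : Integrable f (radMeasure d) := by
  have hmeas := aestronglyMeasurable_radMeasure_of_continuousOn (d := d) hf
  have hbounded : IntegrableOn f (Iio 1) (radMeasure d) := by
    refine Measure.integrableOn_of_bounded (M := B) ?_ hmeas (ae_restrict_of_ae ?_)
    · simp [radMeasure_Iio hd zero_le_one]
    · exact ae_radMeasure_of_forall_pos fun r hr => (norm_of_nonneg (hf0 r hr)).trans_le (hB r hr)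
  have hdecay : IntegrableOn (fun r => C * r ^ (-p)) (Ici 1) (radMeasure d) := by
    rw [integrableOn_Ici_iff_integrableOn_Ioi (by simp),
      integrableOn_radMeasure_iff measurableSet_Ioi,
      inter_eq_left.2 (Ioi_subset_Ioi zero_le_one)]
    have hrpow : IntegrableOn (fun r : ℝ => C * r ^ (-p + (d - 1))) (Ioi 1) :=
      (integrableOn_Ioi_rpow_of_lt (by linarith) one_pos).const_mul C
    refine hrpow.congr_fun (fun r hr => ?_) measurableSet_Ioi
    simp only [rpow_add (one_pos.trans hr), mul_assoc]
  rw [← integrableOn_univ, ← Iio_union_Ici (a := (1 : ℝ))]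
  refine hbounded.union (hdecay.mono' hmeas.restrict (ae_restrict_of_ae ?_))
  exact ae_radMeasure_of_forall_pos fun r hr => (norm_of_nonneg (hf0 r hr)).trans_le (hC r hr)

end RadMeasure

section BetaIntegral

lemma integral_rpow_mul_one_sub_rpow_eq_beta {s b : ℝ} (hs : 0 < s) (hb : 0 < b) :
    ∫ x in (0 : ℝ)..1, x ^ (s - 1) * (1 - x) ^ (b - 1) = ProbabilityTheory.beta s b := by
  rw [ProbabilityTheory.beta_eq_betaIntegralReal s b hs hb, Complex.betaIntegral,
    ← Complex.ofReal_re (∫ x in (0 : ℝ)..1, _), ← intervalIntegral.integral_ofReal]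
  refine congrArg Complex.re (intervalIntegral.integral_congr fun x hx => ?_)
  rw [uIcc_of_le zero_le_one] at hx
  simp [Complex.ofReal_cpow hx.1, Complex.ofReal_cpow (sub_nonneg.2 hx.2)]

lemma integral_rpow_mul_one_sub_rpow_rpow_eq_beta {k s b : ℝ} (hk : 0 < k) (hs : 0 < s)
    (hb : 0 < b) :
    k * ∫ x in (0 : ℝ)..1, x ^ (k * s - 1) * (1 - x ^ k) ^ (b - 1) =
      ProbabilityTheory.beta s b := by
  have hpos {x : ℝ} (hx : x ∈ Ioo (min 0 1) (max 0 1)) : 0 < x := by simpa using hx.1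
  have hsubst := intervalIntegral.integral_comp_mul_deriv_of_deriv_nonneg (a := 0) (b := 1)
    (f := fun x => x ^ k) (f' := fun x => k * x ^ (k - 1))
    (g := fun u => u ^ (s - 1) * (1 - u) ^ (b - 1))
    (continuous_id.rpow_const fun _ => Or.inr hk.le).continuousOn
    (fun x hx => hasDerivAt_rpow_const (Or.inl (hpos hx).ne'))
    (fun x hx => mul_nonneg hk.le (rpow_nonneg (hpos hx).le _))
  rw [zero_rpow hk.ne', one_rpow, integral_rpow_mul_one_sub_rpow_eq_beta hs hb] at hsubst
  rw [← hsubst, ← intervalIntegral.integral_const_mul]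
  refine intervalIntegral.integral_congr_ae (.of_forall fun x hx => ?_)
  have hx : 0 < x := (uIoc_of_le (zero_le_one' ℝ) ▸ hx).1
  have hpow : x ^ (k * s - 1) = (x ^ k) ^ (s - 1) * x ^ (k - 1) := by
    rw [← rpow_mul hx.le, ← rpow_add hx]; ring_nf
  simp only [Function.comp_apply, hpow]
  ring

end BetaIntegral

section Calibration

/-- The slope field `a x √(1 - (x / M)^(2 / a))` calibrating the Sobolev functional in the
Emden–Fowler variable: extremals of height `M` follow it upwards, then downwards. -/
def calibSlope (a M x : ℝ) : ℝ := a * x * √(1 - (x / M) ^ (2 / a))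

/-- The primitive of `calibSlope a M` vanishing at `0`. -/
def calibPot (a M x : ℝ) : ℝ := ∫ t in (0 : ℝ)..x, calibSlope a M t

/-- The Emden–Fowler transform `r ^ a * w r` of a radial function in dimension `d = 2 * a + 2`. -/
def emdenFowler (a : ℝ) (w : ℝ → ℝ) (r : ℝ) : ℝ := r ^ a * w r

/-- The density of the Dirichlet energy of `w` minus that of the multiple of `∫ w ^ (2 + 2 / a)` for
which extremals of height `M` balance; it is the quantity that a calibration bounds from below.
The argument `w'` stands for the derivative of `w`. -/
def energyGap (a M : ℝ) (w w' : ℝ → ℝ) (r : ℝ) : ℝ :=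
  w' r ^ 2 * r ^ (2 * a + 1) - a ^ 2 * M ^ (-(2 / a)) * (w r ^ (2 + 2 / a) * r ^ (2 * a + 1))

variable {a M r : ℝ} {w w' : ℝ → ℝ}

lemma continuous_calibSlope (ha : 0 < a) : Continuous (calibSlope a M) := by
  have hpow : Continuous fun x : ℝ => (x / M) ^ (2 / a) :=
    (continuous_id.div_const M).rpow_const fun _ => Or.inr (by positivity)
  unfold calibSlope
  fun_prop

lemma sq_calibSlope (ha : 0 < a) (hM : 0 < M) {x : ℝ} (hx : 0 ≤ x) (hxM : x ≤ M) :
    calibSlope a M x ^ 2 = a ^ 2 * x ^ 2 - a ^ 2 * M ^ (-(2 / a)) * x ^ (2 + 2 / a) := by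
  have hle : (x / M) ^ (2 / a) ≤ 1 :=
    rpow_le_one (by positivity) ((div_le_one hM).2 hxM) (by positivity)
  rw [calibSlope, mul_pow, sq_sqrt (by linarith),
    rpow_add_of_nonneg hx (by norm_num) (by positivity), div_rpow hx hM.le,
    rpow_neg hM.le, rpow_two]
  field_simp

lemma hasDerivAt_calibPot (ha : 0 < a) (x : ℝ) :
    HasDerivAt (calibPot a M) (calibSlope a M x) x :=
  ((continuous_calibSlope ha).integral_hasStrictDerivAt 0 x).hasDerivAt

lemma calibPot_zero : calibPot a M 0 = 0 := intervalIntegral.integral_same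

lemma calibPot_self (ha : 0 < a) (hM : 0 < M) :
    calibPot a M M = a ^ 2 / 2 * ProbabilityTheory.beta a (3 / 2) * M ^ 2 := by
  have hbeta : 2 / a * ∫ x in (0 : ℝ)..1, x * √(1 - x ^ (2 / a)) =
      ProbabilityTheory.beta a (3 / 2) := by
    rw [← integral_rpow_mul_one_sub_rpow_rpow_eq_beta (k := 2 / a) (by positivity) ha (by norm_num)]
    norm_num [sqrt_eq_rpow, ha.ne']
  have hslope (x : ℝ) : calibSlope a M x = a * M * (x / M * √(1 - (x / M) ^ (2 / a))) := by
    rw [calibSlope]; field_simp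
  simp only [calibPot, hslope]
  rw [intervalIntegral.integral_const_mul,
    intervalIntegral.integral_comp_div (fun y => y * √(1 - y ^ (2 / a))) hM.ne', zero_div,
    div_self hM.ne', smul_eq_mul, ← hbeta]
  field_simp

lemma emdenFowler_zero (ha : a ≠ 0) : emdenFowler a w 0 = 0 := by
  rw [emdenFowler, zero_rpow ha, zero_mul]

lemma hasDerivAt_emdenFowler (hr : 0 < r) (hw : HasDerivAt w (w' r) r) :
    HasDerivAt (emdenFowler a w) (a * r ^ (a - 1) * w r + r ^ a * w' r) r :=
  (hasDerivAt_rpow_const (Or.inl hr.ne')).mul hw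

lemma continuousOn_emdenFowler (ha : a ≠ 0) (hw : ∀ r, 0 < r → HasDerivAt w (w' r) r)
    (hzero : Tendsto (emdenFowler a w) (𝓝[>] 0) (𝓝 0)) :
    ContinuousOn (emdenFowler a w) (Ici 0) := by
  intro r hr
  rcases (mem_Ici.1 hr).eq_or_lt with rfl | hpos
  · rw [← continuousWithinAt_Ioi_iff_Ici, ContinuousWithinAt, emdenFowler_zero ha]
    exact hzero
  · exact (hasDerivAt_emdenFowler hpos (hw r hpos)).continuousAt.continuousWithinAt

lemma mul_sq_mul_rpow_eq_sq_sub {g x : ℝ} (hr : 0 < r) :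
    r * (g ^ 2 * r ^ (2 * a + 1)) =
      (r * (a * r ^ (a - 1) * x + r ^ a * g) - a * (r ^ a * x)) ^ 2 := by
  have hpow : r ^ (2 * a + 1) = r ^ a * r ^ a * r := by
    rw [rpow_add_one hr.ne', ← rpow_add hr]; ring_nf
  rw [hpow, rpow_sub_one hr.ne']
  field_simp
  ring

lemma mul_rpow_mul_rpow_eq_rpow {x : ℝ} (ha : 0 < a) (hr : 0 < r) (hx : 0 ≤ x) :
    r * (x ^ (2 + 2 / a) * r ^ (2 * a + 1)) = (r ^ a * x) ^ (2 + 2 / a) := by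
  rw [mul_rpow (rpow_nonneg hr.le _) hx, ← rpow_mul hr.le,
    show a * (2 + 2 / a) = 2 * a + 1 + 1 by field_simp; ring, rpow_add_one hr.ne' (2 * a + 1)]
  ring

-- After multiplication by `r`, right side minus left side is `(r φ' - σ * calibSlope a M φ) ^ 2`
-- for the Emden–Fowler variable `φ = r ^ a * w r`.
lemma deriv_calibration_le_energyGap {σ : ℝ} (ha : 0 < a) (hM : 0 < M) (hr : 0 < r) (hw : 0 ≤ w r)
    (hσ : σ ^ 2 = 1) (hle : emdenFowler a w r ≤ M) :
    (2 * σ * calibSlope a M (r ^ a * w r) - 2 * a * (r ^ a * w r)) *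
      (a * r ^ (a - 1) * w r + r ^ a * w' r) ≤ energyGap a M w w' r := by
  have hkin := mul_sq_mul_rpow_eq_sq_sub (a := a) (g := w' r) (x := w r) hr
  have hpot := mul_rpow_mul_rpow_eq_rpow ha hr hw
  have hslope := sq_calibSlope ha hM (mul_nonneg (rpow_nonneg hr.le a) hw) hle
  rw [← hpot] at hslope
  set φ' := a * r ^ (a - 1) * w r + r ^ a * w' r
  have hsq := sq_nonneg (r * φ' - σ * calibSlope a M (r ^ a * w r))
  rw [sub_sq, mul_pow σ, hσ] at hsq
  refine le_of_mul_le_mul_left ?_ hr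
  rw [energyGap, mul_sub, hkin]
  linear_combination hsq + hslope

lemma hasDerivAt_calibration (ha : 0 < a) (σ : ℝ) (hr : 0 < r) (hw : HasDerivAt w (w' r) r) :
    HasDerivAt (fun r => 2 * σ * calibPot a M (emdenFowler a w r) - a * emdenFowler a w r ^ 2)
      ((2 * σ * calibSlope a M (r ^ a * w r) - 2 * a * (r ^ a * w r)) *
        (a * r ^ (a - 1) * w r + r ^ a * w' r)) r := by
  have hφ := hasDerivAt_emdenFowler (a := a) hr hw
  refine ((((hasDerivAt_calibPot ha _).comp r hφ).const_mul (2 * σ)).sub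
    ((hφ.pow 2).const_mul a)).congr_deriv ?_
  simp only [emdenFowler]
  push_cast
  ring

-- Calibrating with sign `+1` up to the maximum of `φ` and with sign `-1` beyond it, each half
-- contributes `2 * calibPot a M M`.
lemma four_mul_calibPot_le_setIntegral_energyGap {r₀ : ℝ} (ha : 0 < a) (hr₀ : 0 < r₀)
    (hM : 0 < emdenFowler a w r₀) (hmax : ∀ r, 0 < r → emdenFowler a w r ≤ emdenFowler a w r₀)
    (hw0 : ∀ r, 0 < r → 0 ≤ w r) (hw : ∀ r, 0 < r → HasDerivAt w (w' r) r)
    (hzero : Tendsto (emdenFowler a w) (𝓝[>] 0) (𝓝 0))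
    (htop : Tendsto (emdenFowler a w) atTop (𝓝 0))
    (hint : IntegrableOn (energyGap a (emdenFowler a w r₀) w w') (Ioi 0)) :
    4 * calibPot a (emdenFowler a w r₀) (emdenFowler a w r₀) ≤
      ∫ r in Ioi 0, energyGap a (emdenFowler a w r₀) w w' r := by
  set M := emdenFowler a w r₀
  let Ψ (σ x : ℝ) : ℝ := 2 * σ * calibPot a M x - a * x ^ 2
  have hΨ (σ : ℝ) : Continuous (Ψ σ) := by
    have : Continuous (calibPot a M) :=
      continuous_iff_continuousAt.2 fun x => (hasDerivAt_calibPot ha x).continuousAt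
    fun_prop
  have hΨ0 (σ : ℝ) : Ψ σ 0 = 0 := by simp [Ψ, calibPot_zero]
  have hcont (σ : ℝ) : ContinuousOn (fun r => Ψ σ (emdenFowler a w r)) (Ici 0) :=
    (hΨ σ).comp_continuousOn (continuousOn_emdenFowler ha.ne' hw hzero)
  have hderiv (σ r : ℝ) (hr : 0 < r) := hasDerivAt_calibration (M := M) ha σ hr (hw r hr)
  have hle {σ : ℝ} (hσ : σ ^ 2 = 1) {r : ℝ} (hr : 0 < r) :=
    deriv_calibration_le_energyGap (w' := w') ha hM hr (hw0 r hr) hσ (hmax r hr)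
  have hleft : Ψ 1 M - Ψ 1 (emdenFowler a w 0) ≤ ∫ r in 0..r₀, energyGap a M w w' r :=
    intervalIntegral.sub_le_integral_of_hasDeriv_right_of_le hr₀.le
      ((hcont 1).mono Icc_subset_Ici_self)
      (fun r hr => (hderiv 1 r hr.1).hasDerivWithinAt)
      (((integrableOn_Ici_iff_integrableOn_Ioi (by simp)).2 hint).mono_set Icc_subset_Ici_self)
      (fun r hr => hle (one_pow 2) hr.1)
  have hright : 0 - Ψ (-1) M ≤ ∫ r in Ioi r₀, energyGap a M w w' r :=
    sub_le_setIntegral_Ioi_of_hasDerivAt ((hcont (-1)).mono (Ici_subset_Ici.2 hr₀.le))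
      (fun r hr => hderiv (-1) r (hr₀.trans hr)) (hint.mono_set (Ioi_subset_Ioi hr₀.le))
      (fun r hr => hle (by norm_num) (hr₀.trans hr))
      (hΨ0 (-1) ▸ ((hΨ (-1)).tendsto 0).comp htop)
  rw [emdenFowler_zero ha.ne', hΨ0, ← intervalIntegral.integral_Ioi_sub_Ioi hint hr₀.le] at hleft
  simp only [Ψ] at hleft hright
  linarith

lemma exists_emdenFowler_isMax {r₁ : ℝ} (ha : a ≠ 0) (hr₁ : 0 < r₁) (hwr₁ : 0 < w r₁)
    (hw : ∀ r, 0 < r → HasDerivAt w (w' r) r)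
    (hzero : Tendsto (emdenFowler a w) (𝓝[>] 0) (𝓝 0))
    (htop : Tendsto (emdenFowler a w) atTop (𝓝 0)) :
    ∃ r₀, 0 < r₀ ∧ 0 < emdenFowler a w r₀ ∧
      ∀ r, 0 < r → emdenFowler a w r ≤ emdenFowler a w r₀ := by
  have hpos : 0 < emdenFowler a w r₁ := mul_pos (rpow_pos_of_pos hr₁ _) hwr₁
  obtain ⟨r₀, hr₀, hmax⟩ := exists_isMaxOn_Ici_of_tendsto
    (continuousOn_emdenFowler ha hw hzero) htop (mem_Ici.2 hr₁.le) hpos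
  have hM : 0 < emdenFowler a w r₀ := hpos.trans_le (hmax (mem_Ici.2 hr₁.le))
  refine ⟨r₀, (mem_Ici.1 hr₀).lt_of_ne ?_, hM, fun r hr => hmax (mem_Ici.2 hr.le)⟩
  rintro rfl
  exact hM.ne' (emdenFowler_zero ha)

lemma exists_calibrated_energy_bound {r₁ : ℝ} (ha : 0 < a) (hr₁ : 0 < r₁) (hwr₁ : 0 < w r₁)
    (hw0 : ∀ r, 0 < r → 0 ≤ w r) (hw : ∀ r, 0 < r → HasDerivAt w (w' r) r)
    (hzero : Tendsto (emdenFowler a w) (𝓝[>] 0) (𝓝 0))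
    (htop : Tendsto (emdenFowler a w) atTop (𝓝 0))
    (hE : Integrable (fun r => w' r ^ 2) (radMeasure (2 * a + 2)))
    (hQ : Integrable (fun r => w r ^ (2 + 2 / a)) (radMeasure (2 * a + 2))) :
    ∃ M, 0 < M ∧ a ^ 2 * M ^ (-(2 / a)) * ∫ r, w r ^ (2 + 2 / a) ∂radMeasure (2 * a + 2) +
      2 * a ^ 2 * ProbabilityTheory.beta a (3 / 2) * M ^ 2 ≤
        ∫ r, w' r ^ 2 ∂radMeasure (2 * a + 2) := by
  obtain ⟨r₀, hr₀, hM, hmax⟩ := exists_emdenFowler_isMax ha.ne' hr₁ hwr₁ hw hzero htop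
  refine ⟨_, hM, ?_⟩
  rw [integrable_radMeasure_iff, show 2 * a + 2 - 1 = 2 * a + 1 by ring] at hE hQ
  rw [integral_radMeasure, integral_radMeasure, show 2 * a + 2 - 1 = 2 * a + 1 by ring]
  have hbound := four_mul_calibPot_le_setIntegral_energyGap ha hr₀ hM hmax hw0 hw hzero htop
    (hE.sub (hQ.const_mul _))
  simp only [energyGap] at hbound
  rw [integral_sub hE (hQ.const_mul _), integral_const_mul, calibPot_self ha hM] at hbound
  linarith

lemma mul_rpow_mul_rpow_le_add {γ Q : ℝ} (ha : 0 < a) (hM : 0 < M) (hγ : 0 ≤ γ) (hQ : 0 ≤ Q) :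
    a * (a + 1) * γ ^ (1 / (a + 1)) * Q ^ (a / (a + 1)) ≤
      a ^ 2 * M ^ (-(2 / a)) * Q + a * γ * M ^ 2 := by
  have hamgm := geom_mean_le_arith_mean2_weighted (w₁ := a / (a + 1)) (w₂ := 1 / (a + 1))
    (p₁ := M ^ (-(2 / a)) * Q) (p₂ := γ * M ^ 2)
    (by positivity) (by positivity) (by positivity) (by positivity) (by field_simp)
  have hMcancel : (M ^ (-(2 / a))) ^ (a / (a + 1)) * (M ^ 2) ^ (1 / (a + 1)) = 1 := by
    rw [← rpow_two, ← rpow_mul hM.le, ← rpow_mul hM.le, ← rpow_add hM,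
      show -(2 / a) * (a / (a + 1)) + 2 * (1 / (a + 1)) = 0 by field_simp; ring, rpow_zero]
  rw [mul_rpow (by positivity) hQ, mul_rpow hγ (by positivity)] at hamgm
  calc a * (a + 1) * γ ^ (1 / (a + 1)) * Q ^ (a / (a + 1))
      = a * (a + 1) * ((M ^ (-(2 / a))) ^ (a / (a + 1)) * Q ^ (a / (a + 1)) *
          (γ ^ (1 / (a + 1)) * (M ^ 2) ^ (1 / (a + 1)))) := by
        linear_combination -(a * (a + 1) * γ ^ (1 / (a + 1)) * Q ^ (a / (a + 1))) * hMcancel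
    _ ≤ a * (a + 1) * (a / (a + 1) * (M ^ (-(2 / a)) * Q) + 1 / (a + 1) * (γ * M ^ 2)) := by gcongr
    _ = a ^ 2 * M ^ (-(2 / a)) * Q + a * γ * M ^ 2 := by field_simp

end Calibration

section Sobolev

lemma inv_sRad_eq {a : ℝ} (ha : 0 < a) :
    (sRad (2 * a + 2))⁻¹ =
      a * (a + 1) * (2 * a * ProbabilityTheory.beta a (3 / 2)) ^ (1 / (a + 1)) := by
  have hΓ : Gamma (3 / 2) = √π / 2 := by
    rw [show (3 / 2 : ℝ) = 1 / 2 + 1 by norm_num, Gamma_add_one (by norm_num), Gamma_one_half_eq]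
    ring
  have hbeta : 2 * a * ProbabilityTheory.beta a (3 / 2) =
      √π * Gamma (a + 1) / Gamma (a + 3 / 2) := by
    rw [ProbabilityTheory.beta, hΓ, Gamma_add_one ha.ne']
    ring
  have := Gamma_pos_of_pos (show 0 < a + 1 by positivity)
  have := Gamma_pos_of_pos (show 0 < a + 3 / 2 by positivity)
  rw [hbeta, sRad, mul_inv, inv_div, ← inv_rpow (by positivity), inv_div,
    show (2 * a + 2 + 1) / 2 = a + 3 / 2 by ring, show (2 * a + 2) / 2 = a + 1 by ring,
    show 2 / (2 * a + 2) = 1 / (a + 1) by field_simp]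
  ring

lemma sRad_pos {d : ℝ} (hd : 2 < d) : 0 < sRad d := by
  have : 0 < d - 2 := by linarith
  have := Gamma_pos_of_pos (show 0 < (d + 1) / 2 by linarith)
  have := Gamma_pos_of_pos (show 0 < d / 2 by linarith)
  unfold sRad
  positivity

theorem radial_sobolev {d : ℝ} {w w' : ℝ → ℝ} (hd : 2 < d) (hw0 : ∀ r, 0 < r → 0 ≤ w r)
    (hw : ∀ r, 0 < r → HasDerivAt w (w' r) r)
    (hzero : Tendsto (fun r => r ^ ((d - 2) / 2) * w r) (𝓝[>] 0) (𝓝 0))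
    (htop : Tendsto (fun r => r ^ ((d - 2) / 2) * w r) atTop (𝓝 0))
    (hE : Integrable (fun r => w' r ^ 2) (radMeasure d))
    (hQ : Integrable (fun r => w r ^ (2 * d / (d - 2))) (radMeasure d)) :
    (∫ r, w r ^ (2 * d / (d - 2)) ∂radMeasure d) ^ ((d - 2) / d) ≤
      sRad d * ∫ r, w' r ^ 2 ∂radMeasure d := by
  have hs := sRad_pos hd
  obtain ⟨a, rfl⟩ : ∃ a, d = 2 * a + 2 := ⟨(d - 2) / 2, by ring⟩
  have ha : 0 < a := by linarith
  have hq : 2 * (2 * a + 2) / (2 * a + 2 - 2) = 2 + 2 / a := by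
    rw [add_sub_cancel_right]; field_simp
  have hexp : (2 * a + 2 - 2) / (2 * a + 2) = a / (a + 1) := by field_simp; ring
  rw [hq] at hQ ⊢
  rw [show (2 * a + 2 - 2) / 2 = a by ring] at hzero htop
  rw [hexp, ← inv_mul_le_iff₀ hs, inv_sRad_eq ha]
  by_cases hne : ∃ r, 0 < r ∧ 0 < w r
  · obtain ⟨r₁, hr₁, hwr₁⟩ := hne
    obtain ⟨M, hM, hbound⟩ :=
      exists_calibrated_energy_bound ha hr₁ hwr₁ hw0 hw hzero htop hE hQ
    have hβ := ProbabilityTheory.beta_pos ha (show (0 : ℝ) < 3 / 2 by norm_num)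
    have hQ0 : 0 ≤ ∫ r, w r ^ (2 + 2 / a) ∂radMeasure (2 * a + 2) :=
      integral_nonneg_of_ae (ae_radMeasure_of_forall_pos fun r hr => rpow_nonneg (hw0 r hr) _)
    refine (mul_rpow_mul_rpow_le_add ha hM (by positivity) hQ0).trans (hbound.trans' (le_of_eq ?_))
    ring
  · push Not at hne
    have hQzero : ∫ r, w r ^ (2 + 2 / a) ∂radMeasure (2 * a + 2) = 0 :=
      integral_eq_zero_of_ae <| ae_radMeasure_of_forall_pos fun r hr => by
        simp only [(hne r hr).antisymm (hw0 r hr), Pi.zero_apply]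
        exact zero_rpow (by positivity)
    rw [hQzero, zero_rpow (by positivity), mul_zero]
    positivity

end Sobolev

/-- The mass `∫₀ˢ v t ^ (d - 1) dt` of a radial density inside the ball of radius `s`. -/
def radMass (d : ℝ) (v : ℝ → ℝ) (s : ℝ) : ℝ := ∫ t in Iio s, v t ∂radMeasure d

/-- The flux density `-K[v]'` of the radial potential of `v` through the sphere of radius `s`. -/
def radFlux (d : ℝ) (v : ℝ → ℝ) (s : ℝ) : ℝ := s ^ (1 - d) * radMass d v s

section RadialPotential

variable {d r s : ℝ} {v : ℝ → ℝ}

lemma radInvLap_eq_setIntegral_radFlux : radInvLap d v r = ∫ s in Ioi r, radFlux d v s := by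
  simp only [radInvLap, radFlux, radMass, setIntegral_radMeasure measurableSet_Iio, Iio_inter_Ioi]

lemma radMass_nonneg (hv : 0 ≤ᵐ[radMeasure d] v) : 0 ≤ radMass d v s :=
  setIntegral_nonneg_of_ae hv

lemma radFlux_nonneg (hv : 0 ≤ᵐ[radMeasure d] v) (hs : 0 ≤ s) : 0 ≤ radFlux d v s :=
  mul_nonneg (rpow_nonneg hs _) (radMass_nonneg hv)

lemma radInvLap_nonneg (hv : 0 ≤ᵐ[radMeasure d] v) (hr : 0 ≤ r) : 0 ≤ radInvLap d v r := by
  rw [radInvLap_eq_setIntegral_radFlux]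
  exact setIntegral_nonneg measurableSet_Ioi fun s hs => radFlux_nonneg hv (hr.trans (le_of_lt hs))

lemma sq_radFlux_mul_rpow (hs : 0 < s) :
    radFlux d v s ^ 2 * s ^ (d - 1) = radFlux d v s * radMass d v s := by
  have hpow : s ^ (1 - d) * s ^ (d - 1) = 1 := by
    rw [← rpow_add hs, sub_add_sub_cancel', sub_self, rpow_zero]
  rw [radFlux]
  linear_combination (s ^ (1 - d) * radMass d v s ^ 2) * hpow

lemma radMass_le_integral (hv : 0 ≤ᵐ[radMeasure d] v) (hint : Integrable v (radMeasure d)) :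
    radMass d v s ≤ ∫ t, v t ∂radMeasure d :=
  setIntegral_le_integral hint hv

lemma radFlux_le_integral_mul_rpow (hv : 0 ≤ᵐ[radMeasure d] v) (hint : Integrable v (radMeasure d))
    (hs : 0 ≤ s) : radFlux d v s ≤ (∫ t, v t ∂radMeasure d) * s ^ (1 - d) := by
  rw [radFlux, mul_comm]
  exact mul_le_mul_of_nonneg_right (radMass_le_integral hv hint) (rpow_nonneg hs _)

lemma continuous_radMass (hloc : ∀ s, IntegrableOn v (Iio s) (radMeasure d)) :
    Continuous (radMass d v) :=
  continuous_iff_continuousAt.2 fun s =>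
    (hloc (s + 1)).continuousOn_Iic_primitive_Iio.continuousAt (Iic_mem_nhds (lt_add_one s))

lemma continuousAt_radFlux (hloc : ∀ s, IntegrableOn v (Iio s) (radMeasure d)) (hs : s ≠ 0) :
    ContinuousAt (radFlux d v) s :=
  (continuousAt_rpow_const _ _ (Or.inl hs)).mul (continuous_radMass hloc).continuousAt

lemma integrableOn_radFlux_Ioi_of_le_rpow {C b : ℝ} (hb : b < -1) (hv : 0 ≤ᵐ[radMeasure d] v)
    (hloc : ∀ s, IntegrableOn v (Iio s) (radMeasure d))
    (hC : ∀ s, 0 < s → radFlux d v s ≤ C * s ^ b) (hr : 0 < r) :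
    IntegrableOn (radFlux d v) (Ioi r) := by
  have hcont : ContinuousOn (radFlux d v) (Ioi r) := fun s hs =>
    (continuousAt_radFlux hloc (hr.trans hs).ne').continuousWithinAt
  refine ((integrableOn_Ioi_rpow_of_lt hb hr).const_mul C).mono'
    (hcont.aestronglyMeasurable measurableSet_Ioi)
    (ae_restrict_of_forall_mem measurableSet_Ioi fun s hs => ?_)
  rw [norm_of_nonneg (radFlux_nonneg hv (hr.trans hs).le)]
  exact hC s (hr.trans hs)

lemma integrableOn_radFlux_Ioi (hd : 2 < d) (hv : 0 ≤ᵐ[radMeasure d] v)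
    (hint : Integrable v (radMeasure d)) (hr : 0 < r) : IntegrableOn (radFlux d v) (Ioi r) :=
  integrableOn_radFlux_Ioi_of_le_rpow (by linarith) hv (fun _ => hint.integrableOn)
    (fun _ hs => radFlux_le_integral_mul_rpow hv hint hs.le) hr

lemma radInvLap_le_integral_mul_rpow (hd : 2 < d) (hv : 0 ≤ᵐ[radMeasure d] v)
    (hint : Integrable v (radMeasure d)) (hr : 0 < r) :
    radInvLap d v r ≤ (∫ t, v t ∂radMeasure d) / (d - 2) * r ^ (2 - d) := by
  have hle : radInvLap d v r ≤ ∫ s in Ioi r, (∫ t, v t ∂radMeasure d) * s ^ (1 - d) := by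
    rw [radInvLap_eq_setIntegral_radFlux]
    exact setIntegral_mono_on (integrableOn_radFlux_Ioi hd hv hint hr)
      ((integrableOn_Ioi_rpow_of_lt (by linarith) hr).const_mul _) measurableSet_Ioi
      fun s hs => radFlux_le_integral_mul_rpow hv hint (hr.trans hs).le
  refine hle.trans_eq ?_
  have : d - 2 ≠ 0 := by linarith
  rw [integral_const_mul, integral_Ioi_rpow_of_lt (by linarith) hr,
    show 1 - d + 1 = 2 - d by ring, ← neg_sub d 2, neg_div_neg_eq]
  ring

lemma radInvLap_le_radInvLap_zero (hv : 0 ≤ᵐ[radMeasure d] v)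
    (hflux : IntegrableOn (radFlux d v) (Ioi 0)) (hr : 0 ≤ r) :
    radInvLap d v r ≤ radInvLap d v 0 := by
  simp only [radInvLap_eq_setIntegral_radFlux]
  exact setIntegral_mono_set hflux (ae_restrict_of_forall_mem measurableSet_Ioi
    fun s hs => radFlux_nonneg hv (le_of_lt hs)) (Ioi_subset_Ioi hr).eventuallyLE

lemma hasDerivAt_radInvLap (hint : Integrable v (radMeasure d))
    (hflux : IntegrableOn (radFlux d v) (Ioi 0)) (hr : 0 < r) :
    HasDerivAt (radInvLap d v) (-radFlux d v r) r := by
  rw [funext fun r => radInvLap_eq_setIntegral_radFlux (d := d) (v := v) (r := r)]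
  exact hasDerivAt_setIntegral_Ioi hr hflux
    (continuousAt_radFlux (fun _ => hint.integrableOn) hr.ne')

lemma continuousOn_radInvLap (hint : Integrable v (radMeasure d))
    (hflux : IntegrableOn (radFlux d v) (Ioi 0)) : ContinuousOn (radInvLap d v) (Ioi 0) :=
  fun _ hr => (hasDerivAt_radInvLap hint hflux hr).continuousAt.continuousWithinAt

lemma tendsto_rpow_mul_radInvLap_zero {b : ℝ} (hb : 0 < b) (hv : 0 ≤ᵐ[radMeasure d] v)
    (hflux : IntegrableOn (radFlux d v) (Ioi 0)) :
    Tendsto (fun r => r ^ b * radInvLap d v r) (𝓝[>] 0) (𝓝 0) := by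
  have hbound : Tendsto (fun r : ℝ => r ^ b * radInvLap d v 0) (𝓝[>] 0) (𝓝 0) := by
    have := ((continuous_id.rpow_const fun _ => Or.inr hb.le).tendsto (0 : ℝ)).mul_const
      (radInvLap d v 0)
    simpa [zero_rpow hb.ne'] using this.mono_left nhdsWithin_le_nhds
  refine tendsto_of_tendsto_of_tendsto_of_le_of_le' tendsto_const_nhds hbound ?_ ?_ <;>
    filter_upwards [self_mem_nhdsWithin] with r hr
  · exact mul_nonneg (rpow_nonneg (le_of_lt hr) _) (radInvLap_nonneg hv (le_of_lt hr))
  · exact mul_le_mul_of_nonneg_left (radInvLap_le_radInvLap_zero hv hflux (le_of_lt hr))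
      (rpow_nonneg (le_of_lt hr) _)

lemma tendsto_rpow_mul_radInvLap_atTop {b : ℝ} (hd : 2 < d) (hb : b < d - 2)
    (hv : 0 ≤ᵐ[radMeasure d] v) (hint : Integrable v (radMeasure d)) :
    Tendsto (fun r => r ^ b * radInvLap d v r) atTop (𝓝 0) := by
  have hbound : Tendsto (fun r : ℝ => (∫ t, v t ∂radMeasure d) / (d - 2) * r ^ (-(d - 2 - b)))
      atTop (𝓝 0) := by
    simpa using (tendsto_rpow_neg_atTop (sub_pos.2 hb)).const_mul
      ((∫ t, v t ∂radMeasure d) / (d - 2))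
  refine tendsto_of_tendsto_of_tendsto_of_le_of_le' tendsto_const_nhds hbound ?_ ?_ <;>
    filter_upwards [eventually_gt_atTop 0] with r hr
  · exact mul_nonneg (rpow_nonneg hr.le _) (radInvLap_nonneg hv hr.le)
  · refine (mul_le_mul_of_nonneg_left (radInvLap_le_integral_mul_rpow hd hv hint hr)
      (rpow_nonneg hr.le _)).trans_eq ?_
    rw [mul_left_comm, ← rpow_add hr]
    ring_nf

lemma integrable_sq_radFlux (hv : 0 ≤ᵐ[radMeasure d] v) (hint : Integrable v (radMeasure d))
    (hflux : IntegrableOn (radFlux d v) (Ioi 0)) :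
    Integrable (fun r => radFlux d v r ^ 2) (radMeasure d) := by
  rw [integrable_radMeasure_iff]
  have hmul : IntegrableOn (fun s => radFlux d v s * radMass d v s) (Ioi 0) := by
    refine hflux.mul_bdd (c := ∫ t, v t ∂radMeasure d)
      (continuous_radMass fun _ => hint.integrableOn).aestronglyMeasurable (.of_forall fun s => ?_)
    rw [norm_of_nonneg (radMass_nonneg hv)]
    exact radMass_le_integral hv hint
  exact hmul.congr_fun (fun s hs => (sq_radFlux_mul_rpow hs).symm) measurableSet_Ioi

lemma integrable_radInvLap_rpow (hd : 2 < d) (hv : 0 ≤ᵐ[radMeasure d] v)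
    (hint : Integrable v (radMeasure d)) (hflux : IntegrableOn (radFlux d v) (Ioi 0)) {q : ℝ}
    (hq : d < (d - 2) * q) :
    Integrable (fun r => radInvLap d v r ^ q) (radMeasure d) := by
  have hq0 : 0 < q := pos_of_mul_pos_right (by linarith : 0 < (d - 2) * q) (by linarith)
  have hnonneg {r : ℝ} (hr : 0 < r) := radInvLap_nonneg (d := d) hv hr.le
  refine integrable_radMeasure_of_le_rpow (by linarith) hq
    ((continuousOn_radInvLap hint hflux).rpow_const fun _ _ => Or.inr hq0.le)
    (fun r hr => rpow_nonneg (hnonneg hr) q) (B := radInvLap d v 0 ^ q)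
    (C := ((∫ t, v t ∂radMeasure d) / (d - 2)) ^ q) (fun r hr => ?_) (fun r hr => ?_)
  · exact rpow_le_rpow (hnonneg hr) (radInvLap_le_radInvLap_zero hv hflux hr.le) hq0.le
  · have hA : 0 ≤ (∫ t, v t ∂radMeasure d) / (d - 2) :=
      div_nonneg (integral_nonneg_of_ae hv) (by linarith)
    refine (rpow_le_rpow (hnonneg hr) (radInvLap_le_integral_mul_rpow hd hv hint hr)
      hq0.le).trans_eq ?_
    rw [mul_rpow hA (rpow_nonneg hr.le _), ← rpow_mul hr.le]
    ring_nf

lemma integral_mul_radInvLap_eq_integral_sq_radFlux (hint : Integrable v (radMeasure d))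
    (hflux : IntegrableOn (radFlux d v) (Ioi 0)) :
    ∫ r, v r * radInvLap d v r ∂radMeasure d = ∫ r, radFlux d v r ^ 2 ∂radMeasure d := by
  calc ∫ r, v r * radInvLap d v r ∂radMeasure d
      = ∫ r, v r * ∫ s in Ioi r, radFlux d v s ∂volume.restrict (Ioi 0) ∂radMeasure d := by
        refine integral_congr_ae (ae_radMeasure_of_forall_pos fun r hr => ?_)
        simp only [radInvLap_eq_setIntegral_radFlux, Measure.restrict_restrict measurableSet_Ioi,
          inter_eq_left.2 (Ioi_subset_Ioi hr.le)]
    _ = ∫ s in Ioi 0, radFlux d v s * radMass d v s := integral_mul_setIntegral_Ioi_eq hint hflux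
    _ = ∫ r, radFlux d v r ^ 2 ∂radMeasure d := by
        rw [integral_radMeasure]
        exact setIntegral_congr_fun measurableSet_Ioi fun s hs => (sq_radFlux_mul_rpow hs).symm

end RadialPotential

section HLS

variable {d : ℝ} {v : ℝ → ℝ}

lemma holderConjugate_sobolev_exponents (hd : 2 < d) :
    (2 * d / (d + 2)).HolderConjugate (2 * d / (d - 2)) := by
  have : 0 < d - 2 := by linarith
  refine Real.holderConjugate_iff.2 ⟨?_, ?_⟩
  · rw [one_lt_div (by linarith)]; linarith
  · field_simp; ring

lemma le_mul_rpow_of_holder_of_sobolev {E P Q S : ℝ} (hd : 2 < d) (hP : 0 ≤ P) (hQ : 0 ≤ Q)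
    (hE : 0 ≤ E) (hS : 0 ≤ S)
    (hHolder : E ≤ P ^ (1 / (2 * d / (d + 2))) * Q ^ (1 / (2 * d / (d - 2))))
    (hSobolev : Q ^ ((d - 2) / d) ≤ S * E) : E ≤ S * P ^ (1 + 2 / d) := by
  have hd2 : 0 < d - 2 := by linarith
  have hPsq : (P ^ (1 / (2 * d / (d + 2)))) ^ 2 = P ^ (1 + 2 / d) := by
    rw [← rpow_mul_natCast hP]; congr 1; push_cast; field_simp
  have hQsq : (Q ^ (1 / (2 * d / (d - 2)))) ^ 2 = Q ^ ((d - 2) / d) := by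
    rw [← rpow_mul_natCast hQ]; congr 1; push_cast; field_simp
  rcases hE.eq_or_lt with rfl | hEpos
  · positivity
  refine le_of_mul_le_mul_right ?_ hEpos
  calc E * E ≤ P ^ (1 + 2 / d) * Q ^ ((d - 2) / d) := by
        rw [← pow_two, ← hPsq, ← hQsq, ← mul_pow]
        exact pow_le_pow_left₀ hE hHolder 2
    _ ≤ P ^ (1 + 2 / d) * (S * E) := mul_le_mul_of_nonneg_left hSobolev (by positivity)
    _ = S * P ^ (1 + 2 / d) * E := by ring

lemma integrable_mul_radInvLap (hv : 0 ≤ᵐ[radMeasure d] v) (hint : Integrable v (radMeasure d))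
    (hflux : IntegrableOn (radFlux d v) (Ioi 0)) :
    Integrable (fun r => v r * radInvLap d v r) (radMeasure d) := by
  refine hint.mul_bdd (c := radInvLap d v 0) (aestronglyMeasurable_radMeasure_of_continuousOn
    (continuousOn_radInvLap hint hflux)) (ae_radMeasure_of_forall_pos fun r hr => ?_)
  rw [norm_of_nonneg (radInvLap_nonneg hv hr.le)]
  exact radInvLap_le_radInvLap_zero hv hflux hr.le

lemma integral_mul_radInvLap_le_of_integrableOn_radFlux (hd : 2 < d) (hv : 0 ≤ᵐ[radMeasure d] v)
    (hint : Integrable v (radMeasure d)) (hflux : IntegrableOn (radFlux d v) (Ioi 0))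
    (hvp : Integrable (fun r => v r ^ (2 * d / (d + 2))) (radMeasure d)) :
    ∫ r, v r * radInvLap d v r ∂radMeasure d ≤
      sRad d * (∫ r, v r ^ (2 * d / (d + 2)) ∂radMeasure d) ^ (1 + 2 / d) := by
  have hpq := holderConjugate_sobolev_exponents hd
  have hd2 : 0 < d - 2 := by linarith
  have hK : 0 ≤ᵐ[radMeasure d] radInvLap d v :=
    ae_radMeasure_of_forall_pos fun r hr => radInvLap_nonneg hv hr.le
  have hKq : Integrable (fun r => radInvLap d v r ^ (2 * d / (d - 2))) (radMeasure d) :=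
    integrable_radInvLap_rpow hd hv hint hflux (by rw [mul_div_cancel₀ _ hd2.ne']; linarith)
  have hHolder := integral_mul_le_Lp_mul_Lq_of_nonneg hpq hv hK
    (memLp_of_integrable_rpow hpq.pos hv hvp) (memLp_of_integrable_rpow hpq.symm.pos hK hKq)
  have hSobolev := radial_sobolev hd (fun r hr => radInvLap_nonneg hv hr.le)
    (fun r hr => hasDerivAt_radInvLap hint hflux hr)
    (tendsto_rpow_mul_radInvLap_zero (by linarith) hv hflux)
    (tendsto_rpow_mul_radInvLap_atTop hd (by linarith) hv hint)
    (by simpa only [neg_sq] using integrable_sq_radFlux hv hint hflux) hKq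
  simp only [neg_sq, ← integral_mul_radInvLap_eq_integral_sq_radFlux hint hflux] at hSobolev
  refine le_mul_rpow_of_holder_of_sobolev hd (integral_nonneg_of_ae ?_) (integral_nonneg_of_ae ?_)
    (integral_nonneg_of_ae ?_) (sRad_pos hd).le hHolder hSobolev
  · filter_upwards [hv] with r hr using rpow_nonneg hr _
  · filter_upwards [hK] with r hr using rpow_nonneg hr _
  · filter_upwards [hv, hK] with r hr hKr using mul_nonneg hr hKr

end HLS

section Truncation

variable {d p q r s : ℝ} {v : ℝ → ℝ} {A : Set ℝ}

lemma integrableOn_Iio_of_integrable_rpow (hd : 0 < d) (hp : 1 ≤ p) (hv : 0 ≤ᵐ[radMeasure d] v)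
    (hvp : Integrable (fun r => v r ^ p) (radMeasure d)) (s : ℝ) :
    IntegrableOn v (Iio s) (radMeasure d) := by
  have hfinite : IsFiniteMeasure ((radMeasure d).restrict (Iio |s|)) :=
    isFiniteMeasure_restrict.2 (by simp [radMeasure_Iio hd (abs_nonneg s)])
  have hLp := (memLp_of_integrable_rpow (by linarith) hv hvp).restrict (Iio |s|)
  have habs : IntegrableOn v (Iio |s|) (radMeasure d) :=
    hLp.integrable (by simpa using hp)
  exact habs.mono_set (Iio_subset_Iio (le_abs_self s))

lemma radMass_le_of_integrable_rpow (hd : 0 < d) (hpq : p.HolderConjugate q)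
    (hv : 0 ≤ᵐ[radMeasure d] v) (hvp : Integrable (fun r => v r ^ p) (radMeasure d))
    (hs : 0 ≤ s) :
    radMass d v s ≤ (∫ r, v r ^ p ∂radMeasure d) ^ (1 / p) * (s ^ d / d) ^ (1 / q) := by
  have hfinite : IsFiniteMeasure ((radMeasure d).restrict (Iio s)) :=
    isFiniteMeasure_restrict.2 (by simp [radMeasure_Iio hd hs])
  have hvp0 : 0 ≤ᵐ[radMeasure d] fun r => v r ^ p := by
    filter_upwards [hv] with r hr using rpow_nonneg hr p
  have hHolder := integral_mul_le_Lp_mul_Lq_of_nonneg hpq (g := fun _ => 1)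
    (ae_restrict_of_ae (s := Iio s) hv) (.of_forall fun _ => zero_le_one)
    ((memLp_of_integrable_rpow hpq.pos hv hvp).restrict _) (memLp_const 1)
  have hvolume : (radMeasure d).real (Iio s) = s ^ d / d := by
    rw [measureReal_def, radMeasure_Iio hd hs, ENNReal.toReal_ofReal (by positivity)]
  simp only [mul_one, one_rpow, setIntegral_const, hvolume, smul_eq_mul] at hHolder
  refine hHolder.trans (mul_le_mul_of_nonneg_right (rpow_le_rpow ?_ ?_ ?_) (by positivity))
  · exact setIntegral_nonneg_of_ae hvp0
  · exact setIntegral_le_integral hvp hvp0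
  · exact one_div_nonneg.2 hpq.nonneg

lemma integrableOn_radFlux_Ioi_of_integrable_rpow (hd : 2 < d) (hpq : p.HolderConjugate q)
    (hq : d < (d - 2) * q) (hv : 0 ≤ᵐ[radMeasure d] v)
    (hvp : Integrable (fun r => v r ^ p) (radMeasure d)) (hr : 0 < r) :
    IntegrableOn (radFlux d v) (Ioi r) := by
  have hd0 : 0 < d := by linarith
  have hexp : 1 - d + d / q < -1 := by
    have := (div_lt_iff₀ hpq.symm.pos).2 hq
    linarith
  refine integrableOn_radFlux_Ioi_of_le_rpow hexp hv
    (integrableOn_Iio_of_integrable_rpow hd0 hpq.lt.le hv hvp)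
    (C := (∫ r, v r ^ p ∂radMeasure d) ^ (1 / p) / d ^ (1 / q)) (fun s hs => ?_) hr
  refine (mul_le_mul_of_nonneg_left (radMass_le_of_integrable_rpow hd0 hpq hv hvp hs.le)
    (rpow_nonneg hs.le _)).trans_eq ?_
  rw [div_rpow (by positivity) hd0.le, ← rpow_mul hs.le, rpow_add hs, mul_one_div]
  ring

lemma radMass_indicator_le (hA : MeasurableSet A) (hv : 0 ≤ᵐ[radMeasure d] v)
    (hs : IntegrableOn v (Iio s) (radMeasure d)) : radMass d (A.indicator v) s ≤ radMass d v s := by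
  rw [radMass, setIntegral_indicator hA]
  exact setIntegral_mono_set hs (ae_restrict_of_ae hv) inter_subset_left.eventuallyLE

lemma integrableOn_radFlux_indicator {ε : ℝ} (hd : 2 < d) (hε : 0 < ε) (hAε : A ⊆ Ici ε)
    (hA : MeasurableSet A) (hv : 0 ≤ᵐ[radMeasure d] v) (hvA : IntegrableOn v A (radMeasure d)) :
    IntegrableOn (radFlux d (A.indicator v)) (Ioi 0) := by
  have hnear : IntegrableOn (radFlux d (A.indicator v)) (Ioc 0 ε) := by
    refine integrableOn_zero.congr_fun (fun s hs => ?_) measurableSet_Ioc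
    have hempty : Iio s ∩ A = ∅ := by
      ext t; simp only [mem_inter_iff, mem_Iio, mem_empty_iff_false, iff_false, not_and]
      exact fun hts htA => (hts.trans_le hs.2).not_ge (hAε htA)
    rw [radFlux, radMass, setIntegral_indicator hA, hempty, setIntegral_empty, mul_zero]
  have hfar := integrableOn_radFlux_Ioi hd (indicator_nonneg_ae hv) (hvA.integrable_indicator hA) hε
  rw [← Ioc_union_Ioi_eq_Ioi hε.le]
  exact hnear.union hfar

variable {φ : ℕ → Set ℝ}

lemma tendsto_radMass_indicator (hφ : AECover (radMeasure d) atTop φ)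
    (hs : IntegrableOn v (Iio s) (radMeasure d)) :
    Tendsto (fun n => radMass d ((φ n).indicator v) s) atTop (𝓝 (radMass d v s)) := by
  simpa only [radMass, integral_indicator (hφ.measurableSet _)] using
    hφ.restrict.integral_tendsto_of_countably_generated hs

lemma tendsto_radInvLap_indicator (hφ : AECover (radMeasure d) atTop φ)
    (hv : 0 ≤ᵐ[radMeasure d] v) (hloc : ∀ s, IntegrableOn v (Iio s) (radMeasure d)) (hr : 0 ≤ r)
    (hflux : IntegrableOn (radFlux d v) (Ioi r))
    (hfluxφ : ∀ n, IntegrableOn (radFlux d ((φ n).indicator v)) (Ioi r)) :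
    Tendsto (fun n => radInvLap d ((φ n).indicator v) r) atTop (𝓝 (radInvLap d v r)) := by
  simp only [radInvLap_eq_setIntegral_radFlux]
  refine tendsto_integral_of_dominated_convergence (radFlux d v)
    (fun n => (hfluxφ n).aestronglyMeasurable) hflux (fun n => ?_) ?_ <;>
    refine ae_restrict_of_forall_mem measurableSet_Ioi fun s hs => ?_
  · have hs0 : 0 ≤ s := hr.trans (le_of_lt hs)
    rw [norm_of_nonneg (radFlux_nonneg (indicator_nonneg_ae hv) hs0)]
    exact mul_le_mul_of_nonneg_left (radMass_indicator_le (hφ.measurableSet n) hv (hloc s))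
      (rpow_nonneg hs0 _)
  · exact (tendsto_radMass_indicator hφ (hloc s)).const_mul _

lemma aecover_radMeasure_Ico :
    AECover (radMeasure d) atTop fun n : ℕ => Ico (1 / ((n : ℝ) + 1)) n :=
  ((aecover_Ioi_of_Ici tendsto_one_div_add_atTop_nhds_zero_nat).inter
    (aecover_Iio tendsto_natCast_atTop_atTop)).mono_ac (withDensity_absolutelyContinuous _ _)

lemma integral_mul_radInvLap_indicator_le {ε : ℝ} (hd : 2 < d) (hε : 0 < ε) (hAε : A ⊆ Ici ε)
    (hA : MeasurableSet A) (hv : 0 ≤ᵐ[radMeasure d] v) (hvA : IntegrableOn v A (radMeasure d))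
    (hvp : Integrable (fun r => v r ^ (2 * d / (d + 2))) (radMeasure d)) :
    ∫ r, A.indicator v r * radInvLap d (A.indicator v) r ∂radMeasure d ≤
      sRad d * (∫ r, v r ^ (2 * d / (d + 2)) ∂radMeasure d) ^ (1 + 2 / d) := by
  have hp : 0 < 2 * d / (d + 2) := by positivity
  have hpow : (fun r => A.indicator v r ^ (2 * d / (d + 2))) =
      A.indicator fun r => v r ^ (2 * d / (d + 2)) := by
    ext r; by_cases hr : r ∈ A <;> simp [hr, zero_rpow hp.ne']
  have hvp0 : 0 ≤ᵐ[radMeasure d] fun r => v r ^ (2 * d / (d + 2)) := by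
    filter_upwards [hv] with r hr using rpow_nonneg hr _
  refine (integral_mul_radInvLap_le_of_integrableOn_radFlux hd (indicator_nonneg_ae hv)
    (hvA.integrable_indicator hA) (integrableOn_radFlux_indicator hd hε hAε hA hv hvA)
    (by simpa only [hpow] using hvp.indicator hA)).trans ?_
  rw [hpow, integral_indicator hA]
  refine mul_le_mul_of_nonneg_left (rpow_le_rpow ?_ ?_ (by positivity)) (sRad_pos hd).le
  · exact setIntegral_nonneg_of_ae hvp0
  · exact setIntegral_le_integral hvp hvp0

theorem integrable_and_integral_mul_radInvLap_le (hd : 2 < d) (hv : 0 ≤ᵐ[radMeasure d] v)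
    (hvp : Integrable (fun r => v r ^ (2 * d / (d + 2))) (radMeasure d)) :
    Integrable (fun r => v r * radInvLap d v r) (radMeasure d) ∧
      ∫ r, v r * radInvLap d v r ∂radMeasure d ≤
        sRad d * (∫ r, v r ^ (2 * d / (d + 2)) ∂radMeasure d) ^ (1 + 2 / d) := by
  have hpq := holderConjugate_sobolev_exponents hd
  have hq : d < (d - 2) * (2 * d / (d - 2)) := by
    rw [mul_div_cancel₀ _ (by linarith)]; linarith
  have hφ := aecover_radMeasure_Ico (d := d)
  have hε (n : ℕ) : 0 < 1 / ((n : ℝ) + 1) := Nat.one_div_pos_of_nat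
  have hv' (n : ℕ) := indicator_nonneg_ae (A := Ico (1 / ((n : ℝ) + 1)) n) hv
  have hloc := integrableOn_Iio_of_integrable_rpow (by linarith) hpq.lt.le hv hvp
  have hvφ (n : ℕ) := (hloc n).mono_set (Ico_subset_Iio_self (a := 1 / ((n : ℝ) + 1)))
  have hflux (n : ℕ) := integrableOn_radFlux_indicator hd (hε n) Ico_subset_Ici_self
    measurableSet_Ico hv (hvφ n)
  refine integrable_and_integral_le_of_tendsto
    (fun n => integrable_mul_radInvLap (hv' n) ((hvφ n).integrable_indicator measurableSet_Ico)
      (hflux n))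
    (fun n => ?_)
    (fun n => integral_mul_radInvLap_indicator_le hd (hε n) Ico_subset_Ici_self measurableSet_Ico
      hv (hvφ n) hvp) ?_
  · filter_upwards [hv' n, ae_radMeasure_of_forall_pos fun r hr =>
      radInvLap_nonneg (hv' n) hr.le] with r hvr hKr using mul_nonneg hvr hKr
  · filter_upwards [hφ.ae_tendsto_indicator v, ae_radMeasure_of_forall_pos fun r hr =>
      tendsto_radInvLap_indicator hφ hv hloc hr.le
        (integrableOn_radFlux_Ioi_of_integrable_rpow hd hpq hq hv hvp hr)
        fun n => (hflux n).mono_set (Ioi_subset_Ioi hr.le)] with r hvr hKr using hvr.mul hKr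

end Truncation

/-- the radial Hardy-Littlewood-Sobolev inequality with real dimension
parameter `d > 2`. -/
theorem radial_hls (d : ℝ) (hd : 2 < d) (v : ℝ → ℝ)
    (hv0 : ∀ r, 0 < r → 0 ≤ v r)
    (h : IntegrableOn (fun r => v r ^ (2 * d / (d + 2)) * r ^ (d - 1)) (Set.Ioi 0)) :
    (∫ r in Set.Ioi (0 : ℝ), v r * radInvLap d v r * r ^ (d - 1)) ≤
      sRad d * (∫ r in Set.Ioi (0 : ℝ), v r ^ (2 * d / (d + 2)) * r ^ (d - 1)) ^ (1 + 2 / d) := by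
  have hv : 0 ≤ᵐ[radMeasure d] v := ae_radMeasure_of_forall_pos hv0
  simpa only [integral_radMeasure] using
    (integrable_and_integral_mul_radInvLap_le hd hv (integrable_radMeasure_iff.2 h)).2
end
end
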